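/- There exist 0 < r2 < r1 < r0, a constant M > 0, and maps H : B_E(ξ0,r1) → ℝ^k and β : B_{ℝ^k}(h0,r1) × [0,r1] → E with the following properties: H(ξ) → h0 as ξ → ξ0; β(·,ε) is continuous on B_{ℝ^k}(h0,r1) for each ε ∈ [0,r1]; β(h,ε) ∈ E_{2,h} and ‖β(h,ε)‖ ≤ M ε for all h ∈ B_{ℝ^k}(h0,r1) and ε ∈ [0,r1]; β(h,ε)/ε → −R_h π_{2,h} Q(S(h),0) as ε → 0+, uniformly in h ∈ B_{ℝ^k}(h0,r1); and moreover: (1) if (ξ,ε) ∈ B_E(ξ0,r2) × [0,r2] satisfies F(ξ,ε) = 0, then h = H(ξ) satisfies (S'(h))^{-1} π_{1,h}[P(β(h,ε)+S(h)) − (β(h,ε)+S(h)) + ε Q(β(h,ε)+S(h),ε)] = 0; (2) if (h,ε) ∈ B_{ℝ^k}(h0,r1) × [0,r1] satisfies (S'(h))^{-1} π_{1,h}[P(β(h,ε)+S(h)) − (β(h,ε)+S(h)) + ε Q(β(h,ε)+S(h),ε)] = 0, then ξ = β(h,ε)+S(h) satisfies F(ξ,ε) = 0. -/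

import Mathlib

open Set Metric Topology Filter

/-!
Write `p h` for the projection onto the tangent space of the manifold `S` of zeros. The equation
`(1 - p h) F(b + S h, ε) = 0` with the constraint `p h b = 0` is equivalent to the single equation
`(1 - p h) F(b + S h, ε) + p h b = 0` on the whole space, whose linearization at `b = 0`, `ε = 0`
is invertible. A map close to an invertible linear one has, near an approximate zero, exactly one
zero, and its distance to any point is controlled by the residual there. This one estimate gives
the bound `O(ε)` (residual at `b = 0`), continuity in `h` (residual at a neighbouring zero) and the
uniform limit (residual at `ε` times the candidate limit).

Every `ξ` near `S h₀` has to be written as `b + S h` with `p h b = 0`. Since `p` is only continuous,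
`h ↦ p h (S h - S h₀)` is differentiable at `h₀` but possibly nowhere else, so the inverse function
theorem does not apply; Brouwer's theorem does. The latter follows Milnor and Rogers: for `g`
vanishing on the boundary of a compact `s`, the volume of the image of `s` under `x ↦ x + t g(x)` is
polynomial in `t` and constant for small `t`, hence `∫ det (1 + Dg)` over `s` is the volume of `s`,
whereas the determinant would vanish identically for a retraction onto the sphere.
-/

section Brouwer

open Module MeasureTheory Polynomial
open scoped NNReal

theorem exists_polynomial_eval_eq_det_one_add_smul {K V : Type*} [Field K] [AddCommGroup V]
    [Module K V] [FiniteDimensional K V] (A : End K V) :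
    ∃ q : K[X], q.natDegree ≤ finrank K V ∧ ∀ t, q.eval t = LinearMap.det (1 + t • A) := by
  let b := finBasis K V
  let M := LinearMap.toMatrix b b A
  refine ⟨Matrix.det ((X : K[X]) • M.map C + (1 : Matrix _ _ K).map C), ?_, fun t => ?_⟩
  · simpa using natDegree_det_X_add_C_le M 1
  · rw [← LinearMap.det_toMatrix b, ← coe_evalRingHom, RingHom.map_det]
    congr 1
    ext i j
    by_cases hij : i = j <;> simp [M, LinearMap.toMatrix_one, hij] <;> ring

theorem exists_det_one_add_eq_sum {ι K V : Type*} [Field K] [AddCommGroup V] [Module K V]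
    [FiniteDimensional K V] {s : Finset ι} {v : ι → K} (hv : InjOn v s)
    (hs : finrank K V < s.card) :
    ∃ w : ι → K, ∀ A : End K V,
      LinearMap.det (1 + A) = ∑ j ∈ s, w j * LinearMap.det (1 + v j • A) := by
  classical
  refine ⟨fun j => (Lagrange.basis s v j).eval 1, fun A => ?_⟩
  obtain ⟨q, hdeg, hq⟩ := exists_polynomial_eval_eq_det_one_add_smul A
  have hlt : q.degree < s.card :=
    (degree_le_of_natDegree_le hdeg).trans_lt (by exact_mod_cast hs)
  calc LinearMap.det (1 + A) = q.eval 1 := by rw [hq, one_smul]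
    _ = (Lagrange.interpolate s v fun j => q.eval (v j)).eval 1 := by
      rw [← Lagrange.eq_interpolate hv hlt]
    _ = ∑ j ∈ s, (Lagrange.basis s v j).eval 1 * LinearMap.det (1 + v j • A) := by
      simp only [Lagrange.interpolate_apply, eval_finsetSum, eval_mul, eval_C, hq, mul_comm]

theorem bijective_add_of_contractingWith {E : Type*} [NormedAddCommGroup E] [CompleteSpace E]
    {K : ℝ≥0} {g : E → E} (hg : ContractingWith K g) : Function.Bijective fun x => x + g x := by
  refine ⟨fun x y hxy => ?_, fun y => ?_⟩
  · have hK : (K : ℝ) < 1 := hg.1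
    have hle : dist x y ≤ K * dist x y := by
      calc dist x y = dist (g y) (g x) := by
            have : x - y = g y - g x := by
              rw [sub_eq_sub_iff_add_eq_add, add_comm (g y)]; exact hxy
            rw [dist_eq_norm, dist_eq_norm, this]
        _ ≤ K * dist x y := by rw [dist_comm (g y)]; exact hg.2.dist_le_mul x y
    exact dist_le_zero.1 (by nlinarith [dist_nonneg (x := x) (y := y)])
  · have hT : ContractingWith K fun x => y - g x :=
      ⟨hg.1, LipschitzWith.of_dist_le_mul fun a b => by
        simpa only [dist_sub_left] using hg.2.dist_le_mul a b⟩
    exact ⟨hT.fixedPoint _, eq_sub_iff_add_eq.1 hT.fixedPoint_isFixedPt.symm⟩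

theorem inter_frontier_nonempty_of_isPreconnected {X : Type*} [TopologicalSpace X] {c s : Set X}
    (hc : IsPreconnected c) (hs : (c ∩ s).Nonempty) (hsc : (c \ s).Nonempty) :
    (c ∩ frontier s).Nonempty := by
  by_contra hempty
  rw [not_nonempty_iff_eq_empty, ← disjoint_iff_inter_eq_empty] at hempty
  have hcover : c ⊆ interior s ∪ interior sᶜ := fun x hx =>
    compl_frontier_eq_union_interior (s := s) ▸ disjoint_left.1 hempty hx
  obtain ⟨x, hxc, hxs⟩ := hs
  obtain ⟨y, hyc, hys⟩ := hsc
  obtain ⟨z, -, hz, hz'⟩ := hc _ _ isOpen_interior isOpen_interior hcover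
    ⟨x, hxc, (hcover hxc).resolve_right fun h => interior_subset h hxs⟩
    ⟨y, hyc, (hcover hyc).resolve_left fun h => hys (interior_subset h)⟩
  exact interior_subset hz' (interior_subset hz)

theorem lipschitzWith_indicator {E F : Type*} [NormedAddCommGroup E] [NormedSpace ℝ E]
    [NormedAddCommGroup F] {K : ℝ≥0} {s : Set E} {g : E → F} (hs : IsClosed s)
    (hg : LipschitzOnWith K g s) (h0 : ∀ x ∈ frontier s, g x = 0) :
    LipschitzWith K (s.indicator g) := by
  have key : ∀ x ∈ s, ∀ y ∉ s, dist (g x) 0 ≤ K * dist x y := fun x hx y hy => by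
    obtain ⟨z, hz, hzs⟩ := inter_frontier_nonempty_of_isPreconnected
      (convex_segment x y).isPreconnected ⟨x, left_mem_segment ℝ x y, hx⟩
      ⟨y, right_mem_segment ℝ x y, hy⟩
    calc dist (g x) 0 = dist (g x) (g z) := by rw [h0 z hzs]
      _ ≤ K * dist x z := hg.dist_le_mul x hx z (hs.frontier_subset hzs)
      _ ≤ K * dist x y := by
        rw [← dist_add_dist_of_mem_segment hz]
        gcongr
        exact le_add_of_nonneg_right dist_nonneg
  refine LipschitzWith.of_dist_le_mul fun x y => ?_
  by_cases hx : x ∈ s <;> by_cases hy : y ∈ s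
  · simpa only [indicator_of_mem, hx, hy] using hg.dist_le_mul x hx y hy
  · simpa only [indicator_of_mem, indicator_of_notMem, hx, hy, not_false_eq_true]
      using key x hx y hy
  · simpa only [indicator_of_mem, indicator_of_notMem, hx, hy, not_false_eq_true, dist_comm]
      using key y hy x hx
  · simpa only [indicator_of_notMem, hx, hy, not_false_eq_true, dist_self] using by positivity

theorem eventually_det_one_add_smul_pos {X V : Type*} [TopologicalSpace X]
    [NormedAddCommGroup V] [NormedSpace ℝ V] {s : Set X} (hs : IsCompact s)
    {A : X → V →L[ℝ] V} (hA : Continuous A) :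
    ∀ᶠ t in 𝓝 (0 : ℝ), ∀ x ∈ s, 0 < (1 + t • A x).det := by
  refine hs.eventually_forall_of_forall_eventually fun x _ => ?_
  have hcont : Continuous fun p : ℝ × X => (1 + p.1 • A p.2).det :=
    ContinuousLinearMap.continuous_det.comp (by fun_prop)
  have hone : (1 + (0 : ℝ) • A x).det = 1 := by
    rw [zero_smul, add_zero]
    exact LinearMap.det_id
  exact hcont.continuousAt.eventually (lt_mem_nhds (one_pos.trans_eq hone.symm))

theorem bijOn_add_smul_of_lipschitzOnWith {V : Type*} [NormedAddCommGroup V] [NormedSpace ℝ V]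
    [CompleteSpace V] {K : ℝ≥0} {s : Set V} {g : V → V} (hs : IsClosed s)
    (hg : LipschitzOnWith K g s) (h0 : ∀ x ∈ frontier s, g x = 0) {t : ℝ} (ht : ‖t‖₊ * K < 1) :
    BijOn (fun x => x + t • g x) s s := by
  have hbij : Function.Bijective fun x => x + t • s.indicator g x :=
    bijective_add_of_contractingWith
      ⟨ht, (lipschitzWith_smul t).comp (lipschitzWith_indicator hs hg h0)⟩
  have hout : BijOn (fun x => x + t • s.indicator g x) sᶜ sᶜ :=
    (bijOn_id _).congr fun x hx => by
      simp only [indicator_of_notMem hx, smul_zero, add_zero, id]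
  have hin : BijOn (fun x => x + t • s.indicator g x) s s := by
    simpa only [compl_compl] using hout.compl hbij
  exact hin.congr fun x hx => by simp only [indicator_of_mem hx]

section Measure

variable {V : Type*} [NormedAddCommGroup V] [NormedSpace ℝ V] [FiniteDimensional ℝ V]
  [MeasurableSpace V] [BorelSpace V] (μ : Measure V) [μ.IsAddHaarMeasure]

theorem eventually_setIntegral_det_one_add_smul_fderiv {s : Set V} (hs : IsCompact s) {g : V → V}
    (hg : ContDiff ℝ 1 g) (h0 : ∀ x ∈ frontier s, g x = 0) :
    ∀ᶠ t in 𝓝 (0 : ℝ), ∫ x in s, (1 + t • fderiv ℝ g x).det ∂μ = μ.real s := by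
  obtain ⟨K, hK⟩ := hg.locallyLipschitz.locallyLipschitzOn.exists_lipschitzOnWith_of_compact hs
  have hsmall : ∀ᶠ t : ℝ in 𝓝 0, ‖t‖₊ * K < 1 := by
    have : Continuous fun t : ℝ => ‖t‖₊ * K := by fun_prop
    exact this.continuousAt.eventually (gt_mem_nhds (by simp))
  filter_upwards [hsmall, eventually_det_one_add_smul_pos hs (hg.continuous_fderiv one_ne_zero)]
    with t ht hpos
  have hbij := bijOn_add_smul_of_lipschitzOnWith hs.isClosed hK h0 ht
  have hderiv : ∀ x ∈ s, HasFDerivWithinAt (fun x => x + t • g x) (1 + t • fderiv ℝ g x) s x :=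
    fun x _ => ((hasFDerivAt_id x).add
      ((hg.differentiable one_ne_zero x).hasFDerivAt.const_smul t)).hasFDerivWithinAt
  calc ∫ x in s, (1 + t • fderiv ℝ g x).det ∂μ
      = ∫ x in s, |(1 + t • fderiv ℝ g x).det| • (1 : ℝ) ∂μ :=
        setIntegral_congr_fun hs.measurableSet fun x hx => by simp [abs_of_pos (hpos x hx)]
    _ = ∫ _ in (fun x => x + t • g x) '' s, (1 : ℝ) ∂μ :=
        (integral_image_eq_integral_abs_det_fderiv_smul μ hs.measurableSet hderiv hbij.injOn
          fun _ => (1 : ℝ)).symm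
    _ = μ.real s := by rw [hbij.image_eq, setIntegral_const, smul_eq_mul, mul_one]

theorem setIntegral_det_one_add_fderiv {s : Set V} (hs : IsCompact s) {g : V → V}
    (hg : ContDiff ℝ 1 g) (h0 : ∀ x ∈ frontier s, g x = 0) :
    ∫ x in s, (1 + fderiv ℝ g x).det ∂μ = μ.real s := by
  have hsmall := eventually_setIntegral_det_one_add_smul_fderiv μ hs hg h0
  obtain ⟨T, hT, hcard⟩ := (infinite_of_mem_nhds (0 : ℝ) hsmall).exists_subset_card_eq
    (finrank ℝ V + 1)
  obtain ⟨w, hw⟩ := exists_det_one_add_eq_sum (K := ℝ) (V := V) (s := T) (v := id)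
    (injOn_id _) (by omega)
  have hw1 : ∑ t ∈ T, w t = 1 := by
    simpa only [smul_zero, add_zero, map_one, mul_one] using (hw 0).symm
  have hg' : Continuous (fderiv ℝ g) := hg.continuous_fderiv one_ne_zero
  have hint (t) (_ : t ∈ T) : IntegrableOn (fun x => w t * (1 + t • fderiv ℝ g x).det) s μ :=
    (continuous_const.mul (ContinuousLinearMap.continuous_det.comp
      (continuous_const.add (hg'.const_smul t)))).continuousOn.integrableOn_compact hs
  calc ∫ x in s, (1 + fderiv ℝ g x).det ∂μ
      = ∫ x in s, ∑ t ∈ T, w t * (1 + t • fderiv ℝ g x).det ∂μ :=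
        integral_congr_ae (.of_forall fun x => hw (fderiv ℝ g x))
    _ = ∑ t ∈ T, w t * μ.real s := by
        rw [integral_finsetSum _ hint]
        exact Finset.sum_congr rfl fun t ht => by rw [integral_const_mul, hT ht]
    _ = μ.real s := by rw [← Finset.sum_mul, hw1, one_mul]

end Measure

section InnerProductSpace

variable {V : Type*} [NormedAddCommGroup V] [InnerProductSpace ℝ V] [FiniteDimensional ℝ V]

theorem det_eq_zero_of_hasFDerivAt_of_norm_eq {f : V → V} {f' : V →L[ℝ] V} {x : V} {r : ℝ}
    (hr : r ≠ 0) (hf : HasFDerivAt f f' x) (hnorm : ∀ᶠ y in 𝓝 x, ‖f y‖ = r) : f'.det = 0 := by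
  have horth (v : V) : inner ℝ (f x) (f' v) = 0 := by
    have hconst : HasFDerivAt (fun y => ‖f y‖ ^ 2) (0 : V →L[ℝ] ℝ) x :=
      (hasFDerivAt_const (r ^ 2) x).congr_of_eventuallyEq (hnorm.mono fun y hy => by simp only [hy])
    simpa using congrArg (· v) (hf.norm_sq.unique hconst)
  by_contra hdet
  have hunit : IsUnit (f' : V →ₗ[ℝ] V) :=
    (LinearMap.isUnit_iff_isUnit_det _).2 (isUnit_iff_ne_zero.2 hdet)
  obtain ⟨v, hv⟩ := ((End.isUnit_iff _).1 hunit).2 (f x)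
  have hfx : f x = 0 := inner_self_eq_zero.1 (hv ▸ horth v)
  exact hr (by rw [← hnorm.self_of_nhds, hfx, norm_zero])

theorem exists_norm_ne_of_contDiff {r : ℝ} (hr : 0 < r) {f : V → V} (hf : ContDiff ℝ 1 f)
    (hid : ∀ x ∈ sphere 0 r, f x = x) : ∃ x, ‖f x‖ ≠ r := by
  by_contra! hnorm
  let _ : MeasurableSpace V := borel V
  have : BorelSpace V := ⟨rfl⟩
  have hdet (x : V) : (1 + fderiv ℝ (fun y => f y - y) x).det = 0 := by
    have hfx := (hf.differentiable one_ne_zero x).hasFDerivAt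
    have hsub : fderiv ℝ (fun y => f y - y) x = fderiv ℝ f x - 1 :=
      (hfx.sub (hasFDerivAt_id x)).fderiv
    rw [hsub, add_sub_cancel]
    exact det_eq_zero_of_hasFDerivAt_of_norm_eq hr.ne' hfx (.of_forall hnorm)
  have hvol := setIntegral_det_one_add_fderiv volume (isCompact_closedBall (0 : V) r)
    (g := fun y => f y - y) (hf.sub contDiff_id) fun x hx =>
      sub_eq_zero.2 (hid x (frontier_closedBall_subset_sphere hx))
  have hpos : 0 < volume.real (closedBall (0 : V) r) :=
    ENNReal.toReal_pos (measure_closedBall_pos _ _ hr).ne' measure_closedBall_lt_top.ne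
  exact hpos.ne (by simpa [hdet] using hvol)

theorem exists_eq_zero_of_contDiff {r : ℝ} (hr : 0 < r) {f : V → V} (hf : ContDiff ℝ 1 f)
    (hid : ∀ x ∈ sphere 0 r, f x = x) : ∃ x, f x = 0 := by
  by_contra! hne
  have hnormalize : ContDiff ℝ 1 fun x => (r * ‖f x‖⁻¹) • f x :=
    (contDiff_const.mul ((hf.norm ℝ hne).inv fun x => norm_ne_zero_iff.2 (hne x))).smul hf
  obtain ⟨x, hx⟩ := exists_norm_ne_of_contDiff hr hnormalize fun x hx => by
    rw [hid x hx, mem_sphere_zero_iff_norm.1 hx, mul_inv_cancel₀ hr.ne', one_smul]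
  refine hx ?_
  rw [norm_smul, norm_mul, norm_inv, norm_norm, mul_assoc,
    inv_mul_cancel₀ (norm_ne_zero_iff.2 (hne x)), mul_one, Real.norm_of_nonneg hr.le]

theorem exists_isFixedPt_of_contDiff {g : V → V} (hg : ContDiff ℝ 1 g) {C : ℝ}
    (hC : ∀ x, ‖g x‖ ≤ C) : ∃ x, g x = x := by
  have hC0 : 0 ≤ C := (norm_nonneg _).trans (hC 0)
  let χ : ContDiffBump (0 : V) := ⟨C + 1, C + 2, by linarith, by linarith⟩
  obtain ⟨x, hx⟩ := exists_eq_zero_of_contDiff (r := C + 2) (by linarith)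
    (contDiff_id.sub (χ.contDiff.smul hg)) fun x hx => by
      simp [χ.zero_of_le_dist (mem_sphere.1 hx).ge]
  have hχx : χ x • g x = x := (sub_eq_zero.1 hx).symm
  have hxC : ‖x‖ ≤ C := by
    calc ‖x‖ = χ x * ‖g x‖ := by rw [← norm_smul_of_nonneg χ.nonneg, hχx]
      _ ≤ 1 * C := mul_le_mul χ.le_one (hC x) (norm_nonneg _) zero_le_one
      _ = C := one_mul C
  have hone : χ x = 1 := χ.one_of_mem_closedBall (mem_closedBall_zero_iff.2 (by
    change ‖x‖ ≤ C + 1; linarith))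
  exact ⟨x, by rwa [hone, one_smul] at hχx⟩

theorem exists_isFixedPt_of_continuous {φ : V → V} (hφ : Continuous φ) {C : ℝ}
    (hC : ∀ x, ‖φ x‖ ≤ C) : ∃ x, φ x = x := by
  by_contra! hne
  have hC0 : 0 ≤ C := (norm_nonneg _).trans (hC 0)
  obtain ⟨x₀, -, hmin⟩ := (isCompact_closedBall (0 : V) (C + 1)).exists_isMinOn
    (nonempty_closedBall.2 (by linarith)) (hφ.dist continuous_id).continuousOn
  have hδ : 0 < dist (φ x₀) x₀ := dist_pos.2 (hne x₀)
  obtain ⟨g, hg, hgφ, -⟩ := hφ.exists_contDiff_approx 1 (ε := fun _ => min (dist (φ x₀) x₀) 1)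
    continuous_const fun _ => lt_min hδ one_pos
  have hgC (x : V) : ‖g x‖ ≤ C + 1 := by
    linarith [norm_le_norm_add_norm_sub' (g x) (φ x), hC x, min_le_right (dist (φ x₀) x₀) 1,
      hgφ x, dist_eq_norm (g x) (φ x)]
  obtain ⟨x, hx⟩ := exists_isFixedPt_of_contDiff hg hgC
  have hxball : x ∈ closedBall 0 (C + 1) := mem_closedBall_zero_iff.2 (hx ▸ hgC x)
  have hlt : dist (φ x) x < dist (φ x₀) x₀ := by
    simpa only [hx, dist_comm x] using (hgφ x).trans_le (min_le_left _ _)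
  exact hlt.not_ge (hmin hxball)

end InnerProductSpace

section NormedSpace

variable {V : Type*} [NormedAddCommGroup V] [NormedSpace ℝ V] [FiniteDimensional ℝ V]

theorem exists_isFixedPt_of_continuousOn_closedBall {c : V} {r : ℝ} (hr : 0 ≤ r) {φ : V → V}
    (hφ : ContinuousOn φ (closedBall c r)) (hmaps : MapsTo φ (closedBall c r) (closedBall c r)) :
    ∃ x ∈ closedBall c r, φ x = x := by
  rcases hr.eq_or_lt with rfl | hr
  · exact ⟨c, by simp, by simpa using hmaps (mem_closedBall_self le_rfl)⟩
  let e : V ≃L[ℝ] EuclideanSpace ℝ (Fin (finrank ℝ V)) := toEuclidean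
  have := Metric.instTietzeExtensionClosedBall ℝ c hr
  let φ' : C(closedBall c r, closedBall c r) := ⟨hmaps.restrict φ _ _, hφ.mapsToRestrict hmaps⟩
  obtain ⟨Φ, hΦ⟩ := φ'.exists_restrict_eq isClosed_closedBall
  have hcont : Continuous fun y => e (Φ (e.symm y)) := by fun_prop
  obtain ⟨C, hC⟩ := ((isCompact_closedBall c r).image e.continuous).isBounded.exists_norm_le
  obtain ⟨y, hy⟩ := exists_isFixedPt_of_continuous hcont fun y =>
    hC _ (mem_image_of_mem e (Φ (e.symm y)).2)
  have hfix : (Φ (e.symm y) : V) = e.symm y := e.eq_symm_apply.2 hy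
  have hball : e.symm y ∈ closedBall c r := hfix ▸ (Φ (e.symm y)).2
  refine ⟨e.symm y, hball, ?_⟩
  calc φ (e.symm y) = φ' ⟨e.symm y, hball⟩ := rfl
    _ = Φ (e.symm y) := congrArg Subtype.val (DFunLike.congr_fun hΦ ⟨e.symm y, hball⟩).symm
    _ = e.symm y := hfix

theorem exists_eq_zero_of_continuousOn_closedBall {c : V} {r : ℝ} (hr : 0 ≤ r) {ψ : V → V}
    (hψ : ContinuousOn ψ (closedBall c r)) (hle : ∀ x ∈ closedBall c r, ‖x - c - ψ x‖ ≤ r) :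
    ∃ x ∈ closedBall c r, ψ x = 0 := by
  obtain ⟨x, hx, hfix⟩ := exists_isFixedPt_of_continuousOn_closedBall hr
    (continuousOn_id.sub hψ) fun x hx =>
      mem_closedBall_iff_norm.2 ((congrArg norm (sub_right_comm x (ψ x) c)).trans_le (hle x hx))
  exact ⟨x, hx, sub_eq_self.1 hfix⟩

end NormedSpace

end Brouwer

section Projection

variable {V E : Type*} [NormedAddCommGroup V] [NormedSpace ℝ V] [NormedAddCommGroup E]
  [NormedSpace ℝ E]

theorem hasFDerivAt_clm_apply_of_eq_zero {F : Type*} [NormedAddCommGroup F] [NormedSpace ℝ F]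
    {A : V → E →L[ℝ] F} {u : V → E} {u' : V →L[ℝ] E} {x : V} (hA : ContinuousAt A x)
    (hu : HasFDerivAt u u' x) (hux : u x = 0) :
    HasFDerivAt (fun y => A y (u y)) ((A x).comp u') x := by
  have hAo : (fun y => A y - A x) =o[𝓝 x] fun _ => (1 : ℝ) :=
    (Asymptotics.isLittleO_one_iff ℝ).2 (tendsto_sub_nhds_zero_iff.2 hA)
  have huO : u =O[𝓝 x] fun y => y - x := by simpa only [hux, sub_zero] using hu.isBigO_sub
  have hrem : (fun y => (A y - A x) (u y)) =o[𝓝 x] fun y => y - x :=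
    (Asymptotics.IsBigO.of_norm_le fun y => (A y - A x).le_opNorm (u y)).trans_isLittleO
      (by simpa using hAo.norm_left.mul_isBigO huO.norm_norm)
  refine .of_isLittleO ((((A x).hasFDerivAt.comp x hu).isLittleO.add hrem).congr_left fun y => ?_)
  simp [hux]

theorem exists_clm_comp_eq_of_range_subset [FiniteDimensional ℝ V] {D : V →L[ℝ] E}
    (hD : Function.Injective D) {p : E →L[ℝ] E} (hp : range p ⊆ range D) :
    ∃ J : E →L[ℝ] V, D.comp J = p := by
  let e := LinearEquiv.ofInjective D.toLinearMap hD
  let p' : E →L[ℝ] D.range := p.codRestrict _ fun x => hp (mem_range_self x)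
  refine ⟨(e.symm.toLinearMap.toContinuousLinearMap).comp p', ?_⟩
  ext x
  exact congrArg Subtype.val (e.apply_symm_apply (p' x))

theorem eventually_forall_eq_zero_of_isIdempotentElem {X : Type*} [TopologicalSpace X]
    {p : X → E →L[ℝ] E} {h₀ : X} (hp : ContinuousAt p h₀)
    (hidem : ∀ᶠ h in 𝓝 h₀, IsIdempotentElem (p h)) :
    ∀ᶠ h in 𝓝 h₀, ∀ x, p h₀ (p h x) = 0 → p h x = 0 := by
  have hclose : ∀ᶠ h in 𝓝 h₀, dist (p h) (p h₀) < 1 := hp.eventually (ball_mem_nhds _ one_pos)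
  filter_upwards [hclose, hidem] with h hlt hh x hx
  have hfix : (p h - p h₀) (p h x) = p h x := by
    rw [sub_apply, hx, sub_zero]
    exact DFunLike.congr_fun hh x
  have hle := (p h - p h₀).le_opNorm (p h x)
  rw [hfix, ← dist_eq_norm] at hle
  exact norm_le_zero_iff.1 (by nlinarith [norm_nonneg (p h x)])

theorem exists_tendsto_eventually_eq_clm_apply [FiniteDimensional ℝ V] {G : V → V}
    {B : V → E →L[ℝ] V} {h₀ : V} (hGc : ∀ᶠ h in 𝓝 h₀, ContinuousAt G h)
    (hG : HasFDerivAt G (.id ℝ V) h₀) (hG0 : G h₀ = 0) (hB : ∀ᶠ h in 𝓝 h₀, ContinuousAt B h) :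
    ∃ H : E → V, Tendsto H (𝓝 0) (𝓝 h₀) ∧ ∀ᶠ η in 𝓝 0, G (H η) = B (H η) η := by
  have hlin : ∀ᶠ h in 𝓝 h₀, ‖G h - (h - h₀)‖ ≤ 1 / 2 * ‖h - h₀‖ := by
    simpa [hG0] using hG.isLittleO.bound (half_pos one_pos)
  obtain ⟨C, hC⟩ : ∃ C, ∀ᶠ h in 𝓝 h₀, ‖B h‖ < C :=
    ⟨_, hB.self_of_nhds.norm.eventually (gt_mem_nhds (lt_add_one _))⟩
  have hC0 : 0 < C := (norm_nonneg _).trans_lt hC.self_of_nhds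
  obtain ⟨δ, hδ, hball⟩ := nhds_basis_closedBall.eventually_iff.1
    ((hGc.and hB).and (hlin.and hC))
  have hlim : Tendsto (fun η : E => 2 * C * ‖η‖) (𝓝 0) (𝓝 0) := by
    simpa using (tendsto_norm_zero (E := E)).const_mul (2 * C)
  have hsol : ∀ᶠ η in 𝓝 (0 : E), ∃ h, ‖h - h₀‖ ≤ 2 * C * ‖η‖ ∧ G h = B h η := by
    filter_upwards [hlim.eventually (gt_mem_nhds hδ)] with η hη
    have hsub := closedBall_subset_closedBall (x := h₀) hη.le
    have hcont : ContinuousOn (fun h => G h - B h η) (closedBall h₀ (2 * C * ‖η‖)) := fun h hh =>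
      have hh := (hball (hsub hh)).1
      (hh.1.sub (hh.2.clm_apply continuousAt_const)).continuousWithinAt
    obtain ⟨h, hh, hzero⟩ := exists_eq_zero_of_continuousOn_closedBall (by positivity) hcont
      fun h hh => by
        obtain ⟨-, hlinh, hCh⟩ := hball (hsub hh)
        calc ‖h - h₀ - (G h - B h η)‖ = ‖B h η - (G h - (h - h₀))‖ := by congr 1; abel
          _ ≤ C * ‖η‖ + 1 / 2 * (2 * C * ‖η‖) := by
            refine (norm_sub_le _ _).trans (add_le_add ?_ (hlinh.trans ?_))
            · exact (B h).le_of_opNorm_le hCh.le η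
            · exact mul_le_mul_of_nonneg_left (mem_closedBall_iff_norm.1 hh) (by norm_num)
          _ = 2 * C * ‖η‖ := by ring
    exact ⟨h, mem_closedBall_iff_norm.1 hh, sub_eq_zero.1 hzero⟩
  obtain ⟨H, hH⟩ := Filter.skolem.1 hsol
  refine ⟨H, tendsto_iff_norm_sub_tendsto_zero.2 ?_, hH.mono fun _ h => h.2⟩
  exact squeeze_zero' (.of_forall fun _ => norm_nonneg _) (hH.mono fun _ h => h.1) hlim

theorem exists_tendsto_projection_sub_eq_zero [FiniteDimensional ℝ V] {S : V → E} {D : V →L[ℝ] E}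
    {p : V → E →L[ℝ] E} {h₀ : V} (hS : ∀ᶠ h in 𝓝 h₀, ContinuousAt S h)
    (hD : HasFDerivAt S D h₀) (hinj : Function.Injective D)
    (hp : ∀ᶠ h in 𝓝 h₀, ContinuousAt p h) (hidem : ∀ᶠ h in 𝓝 h₀, IsIdempotentElem (p h))
    (hrange : range (p h₀) = range D) :
    ∃ H : E → V, Tendsto H (𝓝 (S h₀)) (𝓝 h₀) ∧
      ∀ᶠ ξ in 𝓝 (S h₀), p (H ξ) (ξ - S (H ξ)) = 0 := by
  obtain ⟨J, hJ⟩ := exists_clm_comp_eq_of_range_subset hinj hrange.subset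
  have hpD : (p h₀).comp D = D := by
    ext v
    obtain ⟨x, hx⟩ := hrange.superset (mem_range_self v)
    rw [ContinuousLinearMap.comp_apply, ← hx]
    exact DFunLike.congr_fun hidem.self_of_nhds x
  have hJD : J.comp ((p h₀).comp D) = .id ℝ V := by
    ext v
    refine hinj ?_
    rw [hpD]
    exact (DFunLike.congr_fun hJ (D v)).trans (DFunLike.congr_fun hpD v)
  have hderiv : HasFDerivAt (fun h => J (p h (S h - S h₀))) (.id ℝ V) h₀ :=
    hJD ▸ J.hasFDerivAt.comp h₀ (hasFDerivAt_clm_apply_of_eq_zero hp.self_of_nhds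
      (hD.sub_const _) (sub_self _))
  have hcont : ∀ᶠ h in 𝓝 h₀, ContinuousAt (fun h => J (p h (S h - S h₀))) h :=
    (hS.and hp).mono fun h hh =>
      J.continuous.continuousAt.comp (hh.2.clm_apply (hh.1.sub continuousAt_const))
  obtain ⟨H, hH, hHeq⟩ := exists_tendsto_eventually_eq_clm_apply (B := fun h => J.comp (p h))
    hcont hderiv (by simp) (hp.mono fun h hh => continuousAt_const.clm_comp hh)
  have hsub : Tendsto (fun ξ => ξ - S h₀) (𝓝 (S h₀)) (𝓝 0) := tendsto_sub_nhds_zero_iff.2 tendsto_id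
  refine ⟨fun ξ => H (ξ - S h₀), hH.comp hsub, ?_⟩
  filter_upwards [hsub.eventually hHeq, (hH.comp hsub).eventually
    (eventually_forall_eq_zero_of_isIdempotentElem hp.self_of_nhds hidem)] with ξ hξ hker
  have hJp : J (p (H (ξ - S h₀)) (ξ - S (H (ξ - S h₀)))) = 0 := by
    calc _ = J (p (H (ξ - S h₀)) (ξ - S h₀ - (S (H (ξ - S h₀)) - S h₀))) := by
          rw [sub_sub_sub_cancel_right]
      _ = 0 := by rw [map_sub, map_sub]; exact sub_eq_zero.2 hξ.symm
  exact hker _ (hJ ▸ (congrArg D hJp).trans (map_zero D))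

theorem exists_tendsto_forall_ball_projection_sub_eq_zero [FiniteDimensional ℝ V] {S : V → E}
    {D : V →L[ℝ] E} {p : V → E →L[ℝ] E} {h₀ : V} {U : Set V} (hU : IsOpen U) (hh₀ : h₀ ∈ U)
    (hS : ContinuousOn S U) (hD : HasFDerivAt S D h₀) (hinj : Function.Injective D)
    (hp : ContinuousOn p U) (hidem : ∀ h ∈ U, IsIdempotentElem (p h))
    (hrange : range (p h₀) = range D) :
    ∃ H : E → V, Tendsto H (𝓝 (S h₀)) (𝓝 h₀) ∧ ∀ r > 0, ∀ δ > 0, ∃ r' > 0, r' < r ∧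
      ∀ ξ ∈ ball (S h₀) r', H ξ ∈ ball h₀ r ∧ ‖ξ - S (H ξ)‖ ≤ δ ∧ p (H ξ) (ξ - S (H ξ)) = 0 := by
  have hU₀ : U ∈ 𝓝 h₀ := hU.mem_nhds hh₀
  obtain ⟨H, hH, hpH⟩ := exists_tendsto_projection_sub_eq_zero
    (eventually_of_mem hU₀ fun h hh => hS.continuousAt (hU.mem_nhds hh)) hD hinj
    (eventually_of_mem hU₀ fun h hh => hp.continuousAt (hU.mem_nhds hh))
    (eventually_of_mem hU₀ hidem) hrange
  refine ⟨H, hH, fun r hr δ hδ => ?_⟩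
  have hdist : Tendsto (fun ξ => ‖ξ - S (H ξ)‖) (𝓝 (S h₀)) (𝓝 0) := by
    simpa only [id, sub_self, norm_zero, Function.comp_apply] using
      (tendsto_id.sub ((hS.continuousAt hU₀).tendsto.comp hH)).norm
  obtain ⟨t, ht, hball⟩ := Metric.eventually_nhds_iff_ball.1
    ((hH.eventually (ball_mem_nhds h₀ hr)).and ((hdist.eventually (ge_mem_nhds hδ)).and hpH))
  obtain ⟨r', hr', hlt⟩ := exists_between (lt_min ht hr)
  exact ⟨r', hr', hlt.trans_le (min_le_right _ _), fun ξ hξ =>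
    hball ξ (ball_subset_ball (hlt.le.trans (min_le_left _ _)) hξ)⟩

end Projection

section StableZero

open scoped NNReal

variable {E F : Type*} [NormedAddCommGroup E] [NormedAddCommGroup F]

/-- `b` is a zero of `Φ` in `s` that controls the distance to every approximate zero:
the distance from `x ∈ s` to `b` is at most `K` times the residual of `x`. In particular it is the
only zero of `Φ` in `s`. -/
structure IsStableZeroOn (Φ : E → F) (s : Set E) (K : ℝ) (b : E) : Prop where
  mem : b ∈ s
  eq_zero : Φ b = 0
  norm_sub_le : ∀ x ∈ s, ‖x - b‖ ≤ K * ‖Φ x‖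

namespace IsStableZeroOn

variable {Φ : E → F} {s : Set E} {K : ℝ} {b x : E}

theorem eq_of_eq_zero (hb : IsStableZeroOn Φ s K b) (hx : x ∈ s) (hΦx : Φ x = 0) : x = b :=
  sub_eq_zero.1 (norm_le_zero_iff.1 (by simpa [hΦx] using hb.norm_sub_le x hx))

theorem continuousOn {X : Type*} [TopologicalSpace X] {U : Set X} {Φ : X → E → F} {β : X → E}
    (hβ : ∀ u ∈ U, IsStableZeroOn (Φ u) s K (β u))
    (hΦ : ∀ x ∈ s, ContinuousOn (fun u => Φ u x) U) : ContinuousOn β U := by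
  intro u hu
  have hlim : Tendsto (fun w => K * ‖Φ w (β u)‖) (𝓝[U] u) (𝓝 0) := by
    simpa only [(hβ u hu).eq_zero, norm_zero, mul_zero] using
      (hΦ _ (hβ u hu).mem u hu).tendsto.norm.const_mul K
  refine tendsto_iff_norm_sub_tendsto_zero.2
    (squeeze_zero' (.of_forall fun _ => norm_nonneg _) ?_ hlim)
  filter_upwards [self_mem_nhdsWithin] with w hw
  rw [norm_sub_rev]
  exact (hβ w hw).norm_sub_le _ (hβ u hu).mem

end IsStableZeroOn

theorem exists_forall_approximatesLinearOn_isStableZeroOn [NormedSpace ℝ E] [NormedSpace ℝ F]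
    [CompleteSpace E] (A : E ≃L[ℝ] F) :
    ∃ c : ℝ≥0, 0 < c ∧ ∃ K : ℝ, 0 < K ∧ ∀ (f : E → F) (x₀ : E) (δ : ℝ), 0 ≤ δ →
      ApproximatesLinearOn f (A : E →L[ℝ] F) (closedBall x₀ δ) c → K * ‖f x₀‖ ≤ δ →
      ∃ b, IsStableZeroOn f (closedBall x₀ δ) K b := by
  rcases subsingleton_or_nontrivial E with hE | hE
  · have : Subsingleton F := A.symm.toEquiv.subsingleton
    exact ⟨1, one_pos, 1, one_pos, fun f x₀ δ hδ _ _ =>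
      ⟨x₀, mem_closedBall_self hδ, Subsingleton.elim _ _, fun x _ => by
        simp [Subsingleton.elim x x₀]⟩⟩
  let N : ℝ≥0 := ‖(A.symm : F →L[ℝ] E)‖₊
  have hN : 0 < N⁻¹ := inv_pos.2 A.nnnorm_symm_pos
  have hc : N⁻¹ / 2 < N⁻¹ := half_lt_self hN
  have hgap : 0 < N⁻¹ - N⁻¹ / 2 := tsub_pos_of_lt hc
  refine ⟨N⁻¹ / 2, half_pos hN, _, NNReal.coe_pos.2 (inv_pos.2 hgap), fun f x₀ δ hδ hf hsmall => ?_⟩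
  have hsurj :=
    hf.surjOn_closedBall_of_nonlinearRightInverse A.toNonlinearRightInverse hδ Subset.rfl
  have hzero : (0 : F) ∈ closedBall (f x₀) (((N : ℝ)⁻¹ - (N⁻¹ / 2 : ℝ≥0)) * δ) := by
    rw [mem_closedBall_comm, mem_closedBall_zero_iff]
    rwa [NNReal.coe_inv, inv_mul_le_iff₀ (NNReal.coe_pos.2 hgap), NNReal.coe_sub hc.le,
      NNReal.coe_inv] at hsmall
  obtain ⟨b, hb, hfb⟩ := hsurj hzero
  refine ⟨b, hb, hfb, fun x hx => ?_⟩
  simpa only [Subtype.dist_eq, dist_eq_norm, Set.domRestrict_apply, hfb, sub_zero] using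
    (hf.antilipschitz (.inr hc)).le_mul_dist ⟨x, hx⟩ ⟨b, hb⟩

end StableZero

section SplitMap

open scoped NNReal

variable {E : Type*} [NormedAddCommGroup E] [NormedSpace ℝ E]

/-- For a projection `p`, the zeros of `splitMap p F a` are the vectors `b` in the complement
`ker p` for which `F (b + a)` has no component in `ker p`. This turns the constrained auxiliary
equation of the Lyapunov-Schmidt reduction into one equation on the whole space. -/
def splitMap (p : E →L[ℝ] E) (F : E → E) (a b : E) : E := (1 - p) (F (b + a)) + p b

theorem splitMap_eq_zero_iff {p : E →L[ℝ] E} (hp : IsIdempotentElem p) {F : E → E} {a b : E} :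
    splitMap p F a b = 0 ↔ p b = 0 ∧ (1 - p) (F (b + a)) = 0 := by
  refine ⟨fun h => ?_, fun ⟨h₁, h₂⟩ => by rw [splitMap, h₁, h₂, add_zero]⟩
  have hpb : p b = 0 := by
    have hpq : p ((1 - p) (F (b + a))) = 0 := DFunLike.congr_fun hp.mul_one_sub_self _
    have hpp : p (p b) = p b := DFunLike.congr_fun hp b
    simpa only [splitMap, map_add, hpq, hpp, zero_add, map_zero] using congrArg p h
  exact ⟨hpb, by simpa only [splitMap, hpb, add_zero] using h⟩

theorem inv_smul_splitMap_smul {p : E →L[ℝ] E} {F : E → E} {a v : E} {ε : ℝ} (hε : ε ≠ 0) :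
    ε⁻¹ • splitMap p F a (ε • v) = (1 - p) (ε⁻¹ • F (ε • v + a)) + p v := by
  rw [splitMap, smul_add, map_smul, map_smul, smul_smul, inv_mul_cancel₀ hε, one_smul]

theorem approximatesLinearOn_splitMap {p p₀ F' : E →L[ℝ] E} {F : E → E} {a : E} {s : Set E}
    {c : ℝ≥0} (hF : ApproximatesLinearOn F F' ((· + a) '' s) c) :
    ApproximatesLinearOn (splitMap p F a) ((1 - p₀) * F' + p₀) s
      (‖1 - p‖₊ * c + ‖p - p₀‖₊ * ‖1 - F'‖₊) := by
  intro x hx y hy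
  have hxy := hF _ (mem_image_of_mem _ hx) _ (mem_image_of_mem _ hy)
  rw [add_sub_add_right_eq_sub] at hxy
  have hsplit : splitMap p F a x - splitMap p F a y - ((1 - p₀) * F' + p₀) (x - y)
      = (1 - p) (F (x + a) - F (y + a) - F' (x - y)) + (p - p₀) ((1 - F') (x - y)) := by
    simp only [splitMap, map_sub, sub_apply, add_apply, mul_apply_eq_comp, one_apply_eq_self]
    abel
  rw [hsplit]
  push_cast
  calc _ ≤ ‖1 - p‖ * (c * ‖x - y‖) + ‖p - p₀‖ * (‖1 - F'‖ * ‖x - y‖) :=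
        (norm_add_le _ _).trans (add_le_add ((1 - p).le_opNorm_of_le hxy)
          ((p - p₀).le_opNorm_of_le ((1 - F').le_opNorm _)))
    _ = _ := by ring

theorem tendsto_clm_apply {F Z : Type*} [NormedAddCommGroup F] [NormedSpace ℝ F] {l : Filter Z}
    {A : Z → E →L[ℝ] F} {A₀ : E →L[ℝ] F} {x : Z → E} {x₀ : E} (hA : Tendsto A l (𝓝 A₀))
    (hx : Tendsto x l (𝓝 x₀)) :
    Tendsto (fun z => A z (x z)) l (𝓝 (A₀ x₀)) :=
  (isBoundedBilinearMap_apply.continuous.tendsto (A₀, x₀)).comp (hA.prodMk_nhds hx)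

theorem exists_eventually_isStableZeroOn_splitMap [CompleteSpace E] {Z : Type*} {l : Filter Z}
    {p : Z → E →L[ℝ] E} {p₀ F' : E →L[ℝ] E} {F : Z → E → E} {a : Z → E} {a₀ : E}
    (hp : Tendsto p l (𝓝 p₀)) (ha : Tendsto a l (𝓝 a₀))
    (hF : ∀ c : ℝ≥0, 0 < c → ∃ s ∈ 𝓝 a₀, ∀ᶠ z in l, ApproximatesLinearOn (F z) F' s c)
    (hF0 : Tendsto (fun z => F z (a z)) l (𝓝 0)) (hunit : IsUnit ((1 - p₀) * F' + p₀)) :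
    ∃ δ > 0, ∃ K > 0, ∀ᶠ z in l,
      ∃ b, IsStableZeroOn (splitMap (p z) (F z) (a z)) (closedBall 0 δ) K b := by
  obtain ⟨u, hu⟩ := hunit
  have hu' : (ContinuousLinearEquiv.ofUnit u : E →L[ℝ] E) = (1 - p₀) * F' + p₀ := hu
  obtain ⟨c, hc, K, hK, hstable⟩ :=
    exists_forall_approximatesLinearOn_isStableZeroOn (ContinuousLinearEquiv.ofUnit u)
  obtain ⟨c', hc'0, hc'⟩ := exists_pos_mul_lt hc ‖1 - p₀‖₊
  obtain ⟨s, hs, happrox⟩ := hF c' hc'0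
  obtain ⟨δ, hδ, hball⟩ := Metric.nhds_basis_closedBall.mem_iff.1 hs
  have hconst : ∀ᶠ z in l, ‖1 - p z‖₊ * c' + ‖p z - p₀‖₊ * ‖1 - F'‖₊ < c := by
    have hlim : Tendsto (fun z => ‖1 - p z‖₊ * c' + ‖p z - p₀‖₊ * ‖1 - F'‖₊) l
        (𝓝 (‖1 - p₀‖₊ * c' + ‖p₀ - p₀‖₊ * ‖1 - F'‖₊)) :=
      ((hp.const_sub 1).nnnorm.mul_const _).add ((hp.sub_const p₀).nnnorm.mul_const _)
    rw [sub_self, nnnorm_zero, zero_mul, add_zero] at hlim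
    exact hlim.eventually (gt_mem_nhds hc')
  have hres : ∀ᶠ z in l, K * ‖splitMap (p z) (F z) (a z) 0‖ ≤ δ / 2 := by
    have hlim : Tendsto (fun z => K * ‖splitMap (p z) (F z) (a z) 0‖) l (𝓝 0) := by
      simpa [splitMap] using (tendsto_clm_apply (hp.const_sub 1) hF0).norm.const_mul K
    exact hlim.eventually (ge_mem_nhds (half_pos hδ))
  refine ⟨δ / 2, half_pos hδ, K, hK, ?_⟩
  filter_upwards [hconst, hres, happrox, ha.eventually (closedBall_mem_nhds a₀ (half_pos hδ))]
    with z hcz hresz hz haz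
  refine hstable _ 0 _ (half_pos hδ).le (hu' ▸ ?_) hresz
  refine (approximatesLinearOn_splitMap (hz.mono_set ?_)).mono_num hcz.le
  rintro _ ⟨x, hx, rfl⟩
  refine hball (mem_closedBall_iff_norm.2 ?_)
  rw [add_sub_assoc]
  exact (norm_add_le_of_le (mem_closedBall_zero_iff.1 hx) (mem_closedBall_iff_norm.1 haz)).trans_eq
    (add_halves δ)

/-- The perturbation `f + ε Q(·, ε)` of `f`, with `ε` as the first argument. -/
def perturb (f : E → E) (Q : E → ℝ → E) (ε : ℝ) (ξ : E) : E := f ξ + ε • Q ξ ε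

theorem exists_eventually_approximatesLinearOn_perturb {f : E → E} {f' : E →L[ℝ] E} {a₀ : E}
    {Q : E → ℝ → E} {l : Filter ℝ} {L : ℝ≥0} {t : Set E} (hf : HasStrictFDerivAt f f' a₀)
    (ht : t ∈ 𝓝 a₀) (hQ : ∀ᶠ ε in l, LipschitzOnWith L (Q · ε) t) (hl : Tendsto id l (𝓝 0))
    {c : ℝ≥0} (hc : 0 < c) :
    ∃ s ∈ 𝓝 a₀, ∀ᶠ ε in l, ApproximatesLinearOn (perturb f Q ε) f' s c := by
  obtain ⟨s, hs, hfs⟩ := hf.approximates_deriv_on_nhds (.inr (half_pos hc))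
  have hsmall : ∀ᶠ ε in l, ‖ε‖₊ * L < c / 2 := by
    have hlim : Tendsto (fun ε : ℝ => ‖ε‖₊ * L) l (𝓝 0) := by
      simpa only [nnnorm_zero, zero_mul, id] using hl.nnnorm.mul_const L
    exact hlim.eventually (gt_mem_nhds (half_pos hc))
  refine ⟨s ∩ t, inter_mem hs ht, ?_⟩
  filter_upwards [hQ, hsmall] with ε hQε hε x hx y hy
  have hsplit : perturb f Q ε x - perturb f Q ε y - f' (x - y)
      = (f x - f y - f' (x - y)) + ε • (Q x ε - Q y ε) := by
    rw [perturb, perturb, smul_sub]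
    abel
  have hQxy : ‖ε • (Q x ε - Q y ε)‖ ≤ ‖ε‖ * (L * ‖x - y‖) := by
    rw [norm_smul]
    exact mul_le_mul_of_nonneg_left (hQε.norm_sub_le hx.2 hy.2) (norm_nonneg ε)
  calc _ ≤ (c / 2 : ℝ≥0) * ‖x - y‖ + (‖ε‖₊ * L : ℝ≥0) * ‖x - y‖ := by
        rw [hsplit]
        refine norm_add_le_of_le (hfs x hx.1 y hy.1) (hQxy.trans_eq ?_)
        push_cast
        ring
    _ ≤ (c / 2 : ℝ≥0) * ‖x - y‖ + (c / 2 : ℝ≥0) * ‖x - y‖ := by gcongr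
    _ = c * ‖x - y‖ := by rw [← add_mul, ← NNReal.coe_add, add_halves]

theorem tendsto_inv_smul_perturb {Z : Type*} {l : Filter Z} {f : E → E} {f' : E →L[ℝ] E}
    {Q : E → ℝ → E} {a v : Z → E} {ε : Z → ℝ} {a₁ v₁ q : E} (hf : HasStrictFDerivAt f f' a₁)
    (hε : Tendsto ε l (𝓝[≠] 0)) (ha : Tendsto a l (𝓝 a₁)) (hv : Tendsto v l (𝓝 v₁))
    (hfa : ∀ᶠ z in l, f (a z) = 0) (hQ : Tendsto (fun z => Q (ε z • v z + a z) (ε z)) l (𝓝 q)) :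
    Tendsto (fun z => (ε z)⁻¹ • perturb f Q (ε z) (ε z • v z + a z)) l (𝓝 (f' v₁ + q)) := by
  have hε0 : Tendsto ε l (𝓝 0) := hε.mono_right nhdsWithin_le_nhds
  have hpair : Tendsto (fun z => (ε z • v z + a z, a z)) l (𝓝 (a₁, a₁)) := by
    simpa only [zero_smul, zero_add] using ((hε0.smul hv).add ha).prodMk_nhds ha
  have hrem : (fun z => f (ε z • v z + a z) - f (a z) - f' (ε z • v z)) =o[l] ε := by
    refine (hf.isLittleO.comp_tendsto hpair).congr_left (fun z => ?_) |>.trans_isBigO ?_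
    · simp only [Function.comp_apply, add_sub_cancel_right]
    · simpa only [Function.comp_def, add_sub_cancel_right, smul_eq_mul, mul_one] using
        (Asymptotics.isBigO_refl ε l).smul (hv.isBigO_one ℝ)
  have hlim := (hrem.tendsto_inv_smul_nhds_zero).add (((f'.continuous.tendsto v₁).comp hv).add hQ)
  rw [zero_add] at hlim
  refine hlim.congr' ?_
  filter_upwards [hε self_mem_nhdsWithin, hfa] with z hz hfz
  rw [perturb, hfz, map_smul, sub_zero, smul_add, smul_sub, inv_smul_smul₀ hz, inv_smul_smul₀ hz,
    Function.comp_apply, ← add_assoc, sub_add_cancel]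

end SplitMap

section UniformLimit

variable {E F : Type*} [NormedAddCommGroup E] [NormedSpace ℝ E]
  [NormedAddCommGroup F] [NormedSpace ℝ F]

theorem norm_inv_smul_sub_le {Φ : E → F} {s : Set E} {K ε : ℝ} {b v : E}
    (hb : IsStableZeroOn Φ s K b) (hε : ε ≠ 0) (hv : ε • v ∈ s) :
    ‖ε⁻¹ • b - v‖ ≤ K * ‖ε⁻¹ • Φ (ε • v)‖ := by
  calc ‖ε⁻¹ • b - v‖ = ‖ε⁻¹‖ * ‖ε • v - b‖ := by
        rw [← norm_smul, smul_sub, inv_smul_smul₀ hε, norm_sub_rev]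
    _ ≤ ‖ε⁻¹‖ * (K * ‖Φ (ε • v)‖) := by gcongr; exact hb.norm_sub_le _ hv
    _ = K * ‖ε⁻¹ • Φ (ε • v)‖ := by rw [norm_smul]; ring

theorem tendstoUniformlyOn_inv_smul_of_isStableZeroOn {X : Type*} [TopologicalSpace X]
    {C : Set X} {Φ : X → ℝ → E → F} {β : X → ℝ → E} {v : X → E} {δ K : ℝ} (hC : IsCompact C)
    (hδ : 0 < δ) (hv : ContinuousOn v C)
    (hβ : ∀ᶠ ε in 𝓝[>] 0, ∀ x ∈ C, IsStableZeroOn (Φ x ε) (closedBall 0 δ) K (β x ε))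
    (hΦ : ∀ x ∈ C, Tendsto (fun z : ℝ × X => z.1⁻¹ • Φ z.2 z.1 (z.1 • v z.2))
      (𝓝[>] 0 ×ˢ 𝓝[C] x) (𝓝 0)) :
    TendstoUniformlyOn (fun ε x => ε⁻¹ • β x ε) v (𝓝[>] 0) C := by
  rw [← tendstoLocallyUniformlyOn_iff_tendstoUniformlyOn_of_compact hC,
    tendstoLocallyUniformlyOn_iff_forall_tendsto]
  intro x hx
  have hscaled : Tendsto (fun z : ℝ × X => z.1 • v z.2) (𝓝[>] 0 ×ˢ 𝓝[C] x) (𝓝 0) := by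
    simpa only [zero_smul, Function.comp_apply] using
      (tendsto_fst.mono_right (nhdsWithin_le_nhds (a := (0 : ℝ)) (s := Ioi 0))).smul
        ((hv x hx).tendsto.comp tendsto_snd)
  have hbound : Tendsto (fun z : ℝ × X => K * ‖z.1⁻¹ • Φ z.2 z.1 (z.1 • v z.2)‖)
      (𝓝[>] 0 ×ˢ 𝓝[C] x) (𝓝 0) := by
    simpa only [norm_zero, mul_zero] using (hΦ x hx).norm.const_mul K
  rw [_root_.uniformity_eq_comap_nhds_zero, tendsto_comap_iff]
  refine squeeze_zero_norm' ?_ hbound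
  filter_upwards [hscaled (closedBall_mem_nhds 0 hδ), tendsto_fst hβ,
    tendsto_fst self_mem_nhdsWithin, tendsto_snd self_mem_nhdsWithin] with z hzv hzβ hz hzC
  exact norm_inv_smul_sub_le (hzβ _ hzC) (ne_of_gt hz) hzv

end UniformLimit

section CornerInverse

/-- For an idempotent `p` with complement `q = 1 - p`, the element `R` inverts the compression
`q T q` in the corner `q A q`. The values of `R` off the corner, that is `R * p`, are arbitrary. -/
structure IsCornerInverse {A : Type*} [Ring A] (p T R : A) : Prop where
  mul_eq_zero : p * R = 0
  left_inv : R * (1 - p) * T * (1 - p) = 1 - p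
  right_inv : (1 - p) * T * R * (1 - p) = 1 - p

namespace IsCornerInverse

section Ring

variable {A : Type*} [Ring A] {p T R : A}

theorem exists_unit (hp : IsIdempotentElem p) (hR : IsCornerInverse p T R) :
    ∃ u : Aˣ, (u : A) = (1 - p) * T + p ∧ (↑u⁻¹ : A) * (1 - p) = R * (1 - p) := by
  have hqp : (1 - p) * p = 0 := hp.one_sub_mul_self
  have hpq : p * (1 - p) = 0 := hp.mul_one_sub_self
  refine ⟨⟨(1 - p) * T + p, R * (1 - p) * (1 - T * p) + p, ?_, ?_⟩, rfl, ?_⟩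
  · calc ((1 - p) * T + p) * (R * (1 - p) * (1 - T * p) + p)
        = ((1 - p) * T * R * (1 - p)) * (1 - T * p) + (1 - p) * T * p
          + (p * R) * (1 - p) * (1 - T * p) + p * p := by noncomm_ring
      _ = (1 - p) * (1 - T * p) + (1 - p) * T * p + p := by
        rw [hR.right_inv, hR.mul_eq_zero, hp.eq, zero_mul, zero_mul, add_zero]
      _ = 1 := by noncomm_ring
  · calc (R * (1 - p) * (1 - T * p) + p) * ((1 - p) * T + p)
        = R * ((1 - p) * (1 - p)) * T + R * ((1 - p) * p) - R * (1 - p) * T * (p * (1 - p)) * T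
          - R * (1 - p) * T * (p * p) + p * (1 - p) * T + p * p := by noncomm_ring
      _ = R * (1 - p) * T * (1 - p) + p := by
        rw [hqp, hpq, hp.eq, hp.one_sub.eq]; noncomm_ring
      _ = 1 := by rw [hR.left_inv, sub_add_cancel]
  · change (R * (1 - p) * (1 - T * p) + p) * (1 - p) = R * (1 - p)
    calc (R * (1 - p) * (1 - T * p) + p) * (1 - p)
        = R * ((1 - p) * (1 - p)) - R * (1 - p) * T * (p * (1 - p)) + p * (1 - p) := by
          noncomm_ring
      _ = R * (1 - p) := by rw [hpq, hp.one_sub.eq, mul_zero, sub_zero, add_zero]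

theorem isUnit (hp : IsIdempotentElem p) (hR : IsCornerInverse p T R) :
    IsUnit ((1 - p) * T + p) :=
  let ⟨u, hu, _⟩ := hR.exists_unit hp
  ⟨u, hu⟩

theorem mul_one_sub_eq (hp : IsIdempotentElem p) (hR : IsCornerInverse p T R) :
    R * (1 - p) = Ring.inverse ((1 - p) * T + p) * (1 - p) := by
  obtain ⟨u, hu, huR⟩ := hR.exists_unit hp
  rw [← hu, Ring.inverse_unit, huR]

end Ring

theorem continuousOn_mul_one_sub {A : Type*} [NormedRing A] [HasSummableGeomSeries A] {X : Type*}
    [TopologicalSpace X] {U : Set X} {p T R : X → A} (hp : ContinuousOn p U)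
    (hT : ContinuousOn T U) (hidem : ∀ x ∈ U, IsIdempotentElem (p x))
    (hR : ∀ x ∈ U, IsCornerInverse (p x) (T x) (R x)) :
    ContinuousOn (fun x => R x * (1 - p x)) U := by
  have hq : ContinuousOn (fun x => 1 - p x) U := continuousOn_const.sub hp
  refine ContinuousOn.congr (fun x hx => ?_) fun x hx => (hR x hx).mul_one_sub_eq (hidem x hx)
  obtain ⟨u, hu⟩ := (hR x hx).isUnit (hidem x hx)
  have hinv : ContinuousAt Ring.inverse ((1 - p x) * T x + p x) :=
    hu ▸ NormedRing.inverse_continuousAt u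
  have hu_cont : ContinuousWithinAt (fun x => (1 - p x) * T x + p x) U x :=
    ((hq.mul hT).add hp) x hx
  exact (hinv.tendsto.comp hu_cont).mul (hq x hx)

theorem of_forall_mem_range {E : Type*} [NormedAddCommGroup E] [NormedSpace ℝ E]
    {p T R : E →L[ℝ] E} (hp : IsIdempotentElem p) (hRmem : ∀ x, R x ∈ range ⇑(1 - p))
    (hleft : ∀ x ∈ range ⇑(1 - p), R ((1 - p) (T x)) = x)
    (hright : ∀ x ∈ range ⇑(1 - p), (1 - p) (T (R x)) = x) : IsCornerInverse p T R where
  mul_eq_zero := by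
    ext x
    obtain ⟨y, hy⟩ := hRmem x
    rw [mul_apply_eq_comp, ← hy]
    exact DFunLike.congr_fun hp.mul_one_sub_self y
  left_inv := by ext x; exact hleft _ (mem_range_self x)
  right_inv := by ext x; exact hright _ (mem_range_self x)

end IsCornerInverse

end CornerInverse

section Branch

open scoped NNReal

variable {E : Type*} [NormedAddCommGroup E] [NormedSpace ℝ E] {V : Type*}
  {f : E → E} {Q : E → ℝ → E} {S : V → E} {p : V → E →L[ℝ] E} {β : V → ℝ → E} {δ K : ℝ}

theorem IsCornerInverse.apply_neg_apply_eq_zero {p T R : E →L[ℝ] E} (hR : IsCornerInverse p T R)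
    (y : E) : p (-R y) = 0 := by
  rw [map_neg, neg_eq_zero]
  exact DFunLike.congr_fun hR.mul_eq_zero y

theorem IsCornerInverse.one_sub_apply_add_eq_zero {p T R : E →L[ℝ] E}
    (hR : IsCornerInverse p T R) (y : E) : (1 - p) (T (-R ((1 - p) y)) + y) = 0 := by
  have hT : (1 - p) (T (R ((1 - p) y))) = (1 - p) y := DFunLike.congr_fun hR.right_inv y
  rw [map_neg, map_add, map_neg, hT, neg_add_cancel]

theorem continuousOn_splitMap [TopologicalSpace V] {F : E → E} {U : Set V} (hF : Continuous F)
    (hp : ContinuousOn p U) (hS : ContinuousOn S U) (b : E) :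
    ContinuousOn (fun h => splitMap (p h) F (S h) b) U :=
  ((continuousOn_const.sub hp).clm_apply (hF.comp_continuousOn (continuousOn_const.add hS))).add
    (hp.clm_apply continuousOn_const)

theorem exists_eventually_isStableZeroOn_perturb [CompleteSpace E] [TopologicalSpace V] {h₀ : V}
    {f' : E →L[ℝ] E} {L : ℝ≥0} {t : Set E} (hf : HasStrictFDerivAt f f' (S h₀))
    (hfS : f (S h₀) = 0) (hS : ContinuousAt S h₀) (hp : ContinuousAt p h₀)
    (hunit : IsUnit ((1 - p h₀) * f' + p h₀)) (ht : t ∈ 𝓝 (S h₀))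
    (hQL : ∀ᶠ ε in 𝓝[≥] 0, LipschitzOnWith L (Q · ε) t)
    (hQ : Tendsto (fun z : E × ℝ => Q z.1 z.2) (𝓝 (S h₀) ×ˢ 𝓝[≥] 0) (𝓝 (Q (S h₀) 0))) :
    ∃ δ > 0, ∃ K > 0, ∃ β : V → ℝ → E, ∀ᶠ z in 𝓝 h₀ ×ˢ 𝓝[≥] (0 : ℝ),
      IsStableZeroOn (splitMap (p z.1) (perturb f Q z.2) (S z.1)) (closedBall 0 δ) K
        (β z.1 z.2) := by
  have hS' : Tendsto (fun z : V × ℝ => S z.1) (𝓝 h₀ ×ˢ 𝓝[≥] 0) (𝓝 (S h₀)) :=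
    hS.tendsto.comp tendsto_fst
  have hε : Tendsto (fun z : V × ℝ => z.2) (𝓝 h₀ ×ˢ 𝓝[≥] 0) (𝓝 0) :=
    tendsto_snd.mono_right nhdsWithin_le_nhds
  have hF0 : Tendsto (fun z : V × ℝ => perturb f Q z.2 (S z.1)) (𝓝 h₀ ×ˢ 𝓝[≥] 0) (𝓝 0) := by
    simpa only [perturb, hfS, zero_smul, add_zero, Function.comp_def] using
      (hf.continuousAt.tendsto.comp hS').add (hε.smul (hQ.comp (hS'.prodMk tendsto_snd)))
  obtain ⟨δ, hδ, K, hK, hstable⟩ := exists_eventually_isStableZeroOn_splitMap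
    (F := fun z : V × ℝ => perturb f Q z.2) (hp.tendsto.comp tendsto_fst) hS'
    (fun c hc =>
      let ⟨s, hs, hFs⟩ := exists_eventually_approximatesLinearOn_perturb hf ht hQL
        nhdsWithin_le_nhds hc
      ⟨s, hs, tendsto_snd hFs⟩) hF0 hunit
  obtain ⟨β, hβ⟩ := Filter.skolem.1 hstable
  exact ⟨δ, hδ, K, hK, fun h ε => β (h, ε), hβ⟩

theorem exists_eventually_norm_le_mul_of_isStableZeroOn [TopologicalSpace V] {h₀ : V}
    (hδ : 0 ≤ δ) (hS : ContinuousAt S h₀) (hp : ContinuousAt p h₀) (hfS : ∀ᶠ h in 𝓝 h₀, f (S h) = 0)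
    (hQ : Tendsto (fun z : E × ℝ => Q z.1 z.2) (𝓝 (S h₀) ×ˢ 𝓝[≥] 0) (𝓝 (Q (S h₀) 0)))
    (hK : 0 ≤ K) (hβ : ∀ᶠ z in 𝓝 h₀ ×ˢ 𝓝[≥] (0 : ℝ),
      IsStableZeroOn (splitMap (p z.1) (perturb f Q z.2) (S z.1)) (closedBall 0 δ) K
        (β z.1 z.2)) :
    ∃ M > 0, ∀ᶠ z in 𝓝 h₀ ×ˢ 𝓝[≥] (0 : ℝ), ‖β z.1 z.2‖ ≤ M * z.2 := by
  have hlim : Tendsto (fun z : V × ℝ => ‖(1 - p z.1) (Q (S z.1) z.2)‖) (𝓝 h₀ ×ˢ 𝓝[≥] 0)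
      (𝓝 ‖(1 - p h₀) (Q (S h₀) 0)‖) :=
    (tendsto_clm_apply ((hp.tendsto.const_sub 1).comp tendsto_fst)
      (hQ.comp ((hS.tendsto.comp tendsto_fst).prodMk tendsto_snd))).norm
  let B := ‖(1 - p h₀) (Q (S h₀) 0)‖ + 1
  refine ⟨K * B + 1, by positivity, ?_⟩
  filter_upwards [hβ, tendsto_fst hfS, tendsto_snd self_mem_nhdsWithin,
    hlim.eventually (ge_mem_nhds (lt_add_one _))] with z hz hfz hz0 hzB
  have hres : splitMap (p z.1) (perturb f Q z.2) (S z.1) 0 = z.2 • (1 - p z.1) (Q (S z.1) z.2) := by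
    rw [splitMap, perturb, zero_add, hfz, zero_add, map_smul, map_zero, add_zero]
  calc ‖β z.1 z.2‖ ≤ K * ‖z.2 • (1 - p z.1) (Q (S z.1) z.2)‖ := by
        simpa only [zero_sub, norm_neg, hres] using hz.norm_sub_le 0 (mem_closedBall_self hδ)
    _ = K * ‖(1 - p z.1) (Q (S z.1) z.2)‖ * z.2 := by
        rw [norm_smul, Real.norm_of_nonneg hz0]; ring
    _ ≤ (K * B + 1) * z.2 :=
        mul_le_mul_of_nonneg_right (by nlinarith) hz0

theorem tendstoUniformlyOn_inv_smul_perturb [TopologicalSpace V] {C : Set V} {v : V → E}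
    {f' : V → E →L[ℝ] E} (hC : IsCompact C) (hδ : 0 < δ)
    (hf : ∀ h ∈ C, HasStrictFDerivAt f (f' h) (S h)) (hfS : ∀ h ∈ C, f (S h) = 0)
    (hS : ContinuousOn S C) (hp : ContinuousOn p C) (hv : ContinuousOn v C)
    (hQ : ∀ h ∈ C, Tendsto (fun z : E × ℝ => Q z.1 z.2) (𝓝 (S h) ×ˢ 𝓝[≥] 0) (𝓝 (Q (S h) 0)))
    (hpv : ∀ h ∈ C, p h (v h) = 0) (hfv : ∀ h ∈ C, (1 - p h) (f' h (v h) + Q (S h) 0) = 0)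
    (hβ : ∀ᶠ ε in 𝓝[>] 0, ∀ h ∈ C,
      IsStableZeroOn (splitMap (p h) (perturb f Q ε) (S h)) (closedBall 0 δ) K (β h ε)) :
    TendstoUniformlyOn (fun ε h => ε⁻¹ • β h ε) v (𝓝[>] 0) C := by
  refine tendstoUniformlyOn_inv_smul_of_isStableZeroOn hC hδ hv hβ fun h hh => ?_
  have hε : Tendsto (fun z : ℝ × V => z.1) (𝓝[>] 0 ×ˢ 𝓝[C] h) (𝓝[>] 0) := tendsto_fst
  have hSh : Tendsto (fun z : ℝ × V => S z.2) (𝓝[>] 0 ×ˢ 𝓝[C] h) (𝓝 (S h)) :=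
    (hS h hh).tendsto.comp tendsto_snd
  have hvh : Tendsto (fun z : ℝ × V => v z.2) (𝓝[>] 0 ×ˢ 𝓝[C] h) (𝓝 (v h)) :=
    (hv h hh).tendsto.comp tendsto_snd
  have hph : Tendsto (fun z : ℝ × V => p z.2) (𝓝[>] 0 ×ˢ 𝓝[C] h) (𝓝 (p h)) :=
    (hp h hh).tendsto.comp tendsto_snd
  have hx : Tendsto (fun z : ℝ × V => z.1 • v z.2 + S z.2) (𝓝[>] 0 ×ˢ 𝓝[C] h) (𝓝 (S h)) := by
    simpa only [zero_smul, zero_add] using ((hε.mono_right nhdsWithin_le_nhds).smul hvh).add hSh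
  have hquot := tendsto_inv_smul_perturb (hf h hh)
    (hε.mono_right (nhdsGT_le_nhdsNE 0)) hSh hvh
    (tendsto_snd (eventually_mem_nhdsWithin.mono hfS))
    ((hQ h hh).comp (hx.prodMk (hε.mono_right (nhdsWithin_mono 0 Ioi_subset_Ici_self))))
  have hlim := (tendsto_clm_apply (hph.const_sub 1) hquot).add (tendsto_clm_apply hph hvh)
  rw [hfv h hh, hpv h hh, add_zero] at hlim
  refine hlim.congr' ?_
  filter_upwards [hε self_mem_nhdsWithin] with z hz
  exact (inv_smul_splitMap_smul (ne_of_gt hz)).symm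

end Branch

theorem eventually_forall_mem_closedBall_forall_mem_Icc {V : Type*} [PseudoMetricSpace V] {h₀ : V}
    {q : V × ℝ → Prop} (hq : ∀ᶠ z in 𝓝 h₀ ×ˢ 𝓝[≥] (0 : ℝ), q z) :
    ∀ᶠ r in 𝓝[>] (0 : ℝ), ∀ h ∈ closedBall h₀ r, ∀ ε ∈ Icc 0 r, q (h, ε) := by
  obtain ⟨⟨r, s⟩, ⟨hr, hs⟩, hrs⟩ :=
    (nhds_basis_closedBall.prod (nhdsGE_basis_Icc (a := (0 : ℝ)))).eventually_iff.1 hq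
  filter_upwards [Ioc_mem_nhdsGT (lt_min hr hs)] with r' hr' h hh ε hε
  exact hrs ⟨closedBall_subset_closedBall (hr'.2.trans (min_le_left _ _)) hh,
    hε.1, hε.2.trans (hr'.2.trans (min_le_right _ _))⟩

section Reduction

theorem apply_eq_zero_iff_of_leftInverse {α β G : Type*} [Zero α] [Zero β] [FunLike G α β]
    [ZeroHomClass G α β] {D : G} {g : β → α} (hg : Function.LeftInverse g D) {y : β}
    (hy : y ∈ range D) : g y = 0 ↔ y = 0 := by
  obtain ⟨v, rfl⟩ := hy
  rw [hg v]
  exact ⟨fun hv => by rw [hv, map_zero], fun hv => by rw [← hg v, hv, ← map_zero D, hg 0]⟩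

variable {E V : Type*} [NormedAddCommGroup E] [NormedSpace ℝ E] [NormedAddCommGroup V]
  [NormedSpace ℝ V] {p : E →L[ℝ] E} {F : E → E} {a b ξ : E} {D : V →L[ℝ] E} {g : E → V}

theorem add_eq_of_isStableZeroOn_splitMap {δ K : ℝ}
    (hb : IsStableZeroOn (splitMap p F a) (closedBall 0 δ) K b) (hξ : ‖ξ - a‖ ≤ δ)
    (hpξ : p (ξ - a) = 0) (hF : F ξ = 0) : b + a = ξ := by
  have hzero : splitMap p F a (ξ - a) = 0 := by
    rw [splitMap, sub_add_cancel, hF, map_zero, hpξ, add_zero]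
  rw [← hb.eq_of_eq_zero (mem_closedBall_zero_iff.2 hξ) hzero, sub_add_cancel]

theorem mem_range_one_sub_of_splitMap_eq_zero (hp : IsIdempotentElem p)
    (hb : splitMap p F a b = 0) : b ∈ range ⇑(1 - p) :=
  ⟨b, by rw [sub_apply, one_apply_eq_self, ((splitMap_eq_zero_iff hp).1 hb).1, sub_zero]⟩

theorem eq_zero_iff_of_splitMap_eq_zero (hp : IsIdempotentElem p) (hb : splitMap p F a b = 0)
    (hg : Function.LeftInverse g D) (hrange : range p = range D) :
    F (b + a) = 0 ↔ g (p (F (b + a))) = 0 := by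
  have hqF : (1 - p) (F (b + a)) = 0 := ((splitMap_eq_zero_iff hp).1 hb).2
  rw [sub_apply, one_apply_eq_self, sub_eq_zero] at hqF
  rw [apply_eq_zero_iff_of_leftInverse hg (hrange ▸ mem_range_self _), ← hqF]

end Reduction

section Perturbation

open scoped NNReal

theorem tendsto_nhds_prod_nhdsGE_zero {X Y : Type*} [TopologicalSpace X] [TopologicalSpace Y]
    {Q : X → ℝ → Y}
    (hQ : ContinuousOn (fun z : X × ℝ => Q z.1 z.2) (univ ×ˢ Icc 0 1)) (a : X) :
    Tendsto (fun z : X × ℝ => Q z.1 z.2) (𝓝 a ×ˢ 𝓝[≥] 0) (𝓝 (Q a 0)) := by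
  rw [← nhdsWithin_Icc_eq_nhdsGE one_pos, ← nhdsWithin_univ a, ← nhdsWithin_prod_eq]
  exact hQ (a, 0) ⟨mem_univ a, left_mem_Icc.2 zero_le_one⟩

theorem exists_eventually_lipschitzOnWith {E F : Type*} [NormedAddCommGroup E]
    [NormedAddCommGroup F] {Q : E → ℝ → F}
    (hQ : ∀ R > (0 : ℝ), ∃ L > (0 : ℝ), ∀ ε ∈ Icc (0 : ℝ) 1, ∀ x y : E,
      ‖x‖ ≤ R → ‖y‖ ≤ R → ‖Q x ε - Q y ε‖ ≤ L * ‖x - y‖) (a : E) :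
    ∃ L : ℝ≥0, ∃ t ∈ 𝓝 a, ∀ᶠ ε in 𝓝[≥] 0, LipschitzOnWith L (Q · ε) t := by
  obtain ⟨L, hL, hQL⟩ := hQ (‖a‖ + 1) (by positivity)
  refine ⟨L.toNNReal, {x | ‖x‖ ≤ ‖a‖ + 1},
    continuous_norm.continuousAt.eventually (ge_mem_nhds (lt_add_one ‖a‖)), ?_⟩
  filter_upwards [Icc_mem_nhdsGE one_pos] with ε hε
  refine .of_dist_le_mul fun x hx y hy => ?_
  rw [dist_eq_norm, dist_eq_norm, Real.coe_toNNReal L hL.le]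
  exact hQL ε hε x y hx hy

end Perturbation

section LyapunovSchmidt

variable {E V : Type*} [NormedAddCommGroup E] [NormedSpace ℝ E] [TopologicalSpace V]

/-- The setting of the Lyapunov-Schmidt reduction over a set `U` of parameters: `S` parametrizes
zeros of `f`, and at `S h` the derivative `f' h` of `f` is invertible, with inverse `R h`, on the
complement `ker (p h)`. The perturbation `Q` satisfies the Lipschitz condition (L). -/
structure IsLyapunovSchmidtFamily (f : E → E) (f' : V → E →L[ℝ] E) (Q : E → ℝ → E) (S : V → E)
    (p R : V → E →L[ℝ] E) (U : Set V) : Prop where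
  continuous : Continuous f
  hasStrictFDerivAt : ∀ h ∈ U, HasStrictFDerivAt f (f' h) (S h)
  apply_eq_zero : ∀ h ∈ U, f (S h) = 0
  continuousOn_deriv : ContinuousOn f' U
  continuousOn_zeros : ContinuousOn S U
  continuousOn_projection : ContinuousOn p U
  isIdempotentElem : ∀ h ∈ U, IsIdempotentElem (p h)
  isCornerInverse : ∀ h ∈ U, IsCornerInverse (p h) (f' h) (R h)
  continuousOn_perturbation : ContinuousOn (fun z : E × ℝ => Q z.1 z.2) (univ ×ˢ Icc 0 1)
  exists_lipschitz : ∀ r > (0 : ℝ), ∃ L > (0 : ℝ), ∀ ε ∈ Icc (0 : ℝ) 1, ∀ x y : E,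
    ‖x‖ ≤ r → ‖y‖ ≤ r → ‖Q x ε - Q y ε‖ ≤ L * ‖x - y‖

namespace IsLyapunovSchmidtFamily

variable {f : E → E} {f' : V → E →L[ℝ] E} {Q : E → ℝ → E} {S : V → E} {p R : V → E →L[ℝ] E}
  {U : Set V} {β : V → ℝ → E} {δ K : ℝ}

theorem continuousOn_neg_apply [CompleteSpace E] (hf : IsLyapunovSchmidtFamily f f' Q S p R U) :
    ContinuousOn (fun h => -R h ((1 - p h) (Q (S h) 0))) U := by
  have hcorner := IsCornerInverse.continuousOn_mul_one_sub hf.continuousOn_projection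
    hf.continuousOn_deriv hf.isIdempotentElem hf.isCornerInverse
  have hQ : ContinuousOn (fun h => Q (S h) 0) U :=
    hf.continuousOn_perturbation.comp (hf.continuousOn_zeros.prodMk continuousOn_const)
      fun h _ => ⟨mem_univ (S h), left_mem_Icc.2 zero_le_one⟩
  exact (hcorner.clm_apply hQ).neg

theorem continuousOn_isStableZeroOn (hf : IsLyapunovSchmidtFamily f f' Q S p R U) {W : Set V}
    {ε : ℝ} (hW : W ⊆ U) (hε : ε ∈ Icc (0 : ℝ) 1)
    (hβ : ∀ h ∈ W,
      IsStableZeroOn (splitMap (p h) (perturb f Q ε) (S h)) (closedBall 0 δ) K (β h ε)) :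
    ContinuousOn (fun h => β h ε) W := by
  have hF : Continuous (perturb f Q ε) :=
    hf.continuous.add (continuous_const.smul (hf.continuousOn_perturbation.comp_continuous
      (continuous_id.prodMk continuous_const) fun x => ⟨mem_univ x, hε⟩))
  exact IsStableZeroOn.continuousOn hβ fun b _ => continuousOn_splitMap hF
    (hf.continuousOn_projection.mono hW) (hf.continuousOn_zeros.mono hW) b

theorem tendstoUniformlyOn_isStableZeroOn [CompleteSpace E]
    (hf : IsLyapunovSchmidtFamily f f' Q S p R U) {C : Set V} (hC : IsCompact C)
    (hCU : C ⊆ U) (hδ : 0 < δ)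
    (hβ : ∀ᶠ ε in 𝓝[>] 0, ∀ h ∈ C,
      IsStableZeroOn (splitMap (p h) (perturb f Q ε) (S h)) (closedBall 0 δ) K (β h ε)) :
    TendstoUniformlyOn (fun ε h => ε⁻¹ • β h ε) (fun h => -R h ((1 - p h) (Q (S h) 0)))
      (𝓝[>] 0) C :=
  tendstoUniformlyOn_inv_smul_perturb hC hδ (fun h hh => hf.hasStrictFDerivAt h (hCU hh))
    (fun h hh => hf.apply_eq_zero h (hCU hh)) (hf.continuousOn_zeros.mono hCU)
    (hf.continuousOn_projection.mono hCU) (hf.continuousOn_neg_apply.mono hCU)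
    (fun _ _ => tendsto_nhds_prod_nhdsGE_zero hf.continuousOn_perturbation _)
    (fun h hh => (hf.isCornerInverse h (hCU hh)).apply_neg_apply_eq_zero _)
    (fun h hh => (hf.isCornerInverse h (hCU hh)).one_sub_apply_add_eq_zero _) hβ

theorem of_isFixedPt {P : E → E} {P' : E → E →L[ℝ] E} (hP : ∀ x, HasFDerivAt P (P' x) x)
    (hP' : Continuous P')
    (hQ : ContinuousOn (fun z : E × ℝ => Q z.1 z.2) (univ ×ˢ Icc 0 1))
    (hQL : ∀ r > (0 : ℝ), ∃ L > (0 : ℝ), ∀ ε ∈ Icc (0 : ℝ) 1, ∀ x y : E,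
      ‖x‖ ≤ r → ‖y‖ ≤ r → ‖Q x ε - Q y ε‖ ≤ L * ‖x - y‖)
    (hS : ∀ h ∈ U, ContinuousAt S h) (hPS : ∀ h ∈ U, P (S h) = S h) (hp : ContinuousOn p U)
    (hidem : ∀ h ∈ U, IsIdempotentElem (p h))
    (hR : ∀ h ∈ U, (∀ x, R h x ∈ range ⇑(1 - p h)) ∧
      (∀ x ∈ range ⇑(1 - p h), R h ((1 - p h) (P' (S h) x - x)) = x) ∧
      (∀ x ∈ range ⇑(1 - p h), (1 - p h) (P' (S h) (R h x) - R h x) = x)) :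
    IsLyapunovSchmidtFamily (fun x => P x - x) (fun h => P' (S h) - 1) Q S p R U where
  continuous := (Differentiable.continuous fun x => (hP x).differentiableAt).sub continuous_id
  hasStrictFDerivAt _ _ := (hasStrictFDerivAt_of_hasFDerivAt_of_continuousAt (.of_forall hP)
    hP'.continuousAt).sub (hasStrictFDerivAt_id _)
  apply_eq_zero h hh := sub_eq_zero.2 (hPS h hh)
  continuousOn_deriv := (hP'.comp_continuousOn fun h hh => (hS h hh).continuousWithinAt).sub
    continuousOn_const
  continuousOn_zeros h hh := (hS h hh).continuousWithinAt
  continuousOn_projection := hp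
  isIdempotentElem := hidem
  isCornerInverse h hh := .of_forall_mem_range (hidem h hh) (hR h hh).1 (hR h hh).2.1 (hR h hh).2.2
  continuousOn_perturbation := hQ
  exists_lipschitz := hQL

theorem exists_eventually_isStableZeroOn [CompleteSpace E] {h₀ : V}
    (hf : IsLyapunovSchmidtFamily f f' Q S p R U) (hU : U ∈ 𝓝 h₀) :
    ∃ δ > 0, ∃ K : ℝ, ∃ M > 0, ∃ β : V → ℝ → E, ∀ᶠ z in 𝓝 h₀ ×ˢ 𝓝[≥] (0 : ℝ),
      IsStableZeroOn (splitMap (p z.1) (perturb f Q z.2) (S z.1)) (closedBall 0 δ) K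
        (β z.1 z.2) ∧ ‖β z.1 z.2‖ ≤ M * z.2 := by
  have hh₀ : h₀ ∈ U := mem_of_mem_nhds hU
  have hS : ContinuousAt S h₀ := hf.continuousOn_zeros.continuousAt hU
  have hp : ContinuousAt p h₀ := hf.continuousOn_projection.continuousAt hU
  have hQ := tendsto_nhds_prod_nhdsGE_zero hf.continuousOn_perturbation (S h₀)
  obtain ⟨L, t, ht, hQL⟩ := exists_eventually_lipschitzOnWith hf.exists_lipschitz (S h₀)
  obtain ⟨δ, hδ, K, hK, β, hβ⟩ := exists_eventually_isStableZeroOn_perturb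
    (hf.hasStrictFDerivAt h₀ hh₀) (hf.apply_eq_zero h₀ hh₀) hS hp
    ((hf.isCornerInverse h₀ hh₀).isUnit (hf.isIdempotentElem h₀ hh₀)) ht hQL hQ
  obtain ⟨M, hM, hβM⟩ := exists_eventually_norm_le_mul_of_isStableZeroOn hδ.le hS hp
    (eventually_of_mem hU hf.apply_eq_zero) hQ hK.le hβ
  exact ⟨δ, hδ, K, M, hM, β, hβ.and hβM⟩

end IsLyapunovSchmidtFamily

theorem IsLyapunovSchmidtFamily.exists_branch [CompleteSpace E] {V : Type*} [PseudoMetricSpace V]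
    [ProperSpace V] {f : E → E} {f' : V → E →L[ℝ] E} {Q : E → ℝ → E} {S : V → E}
    {p R : V → E →L[ℝ] E} {U : Set V} {h₀ : V} (hf : IsLyapunovSchmidtFamily f f' Q S p R U)
    (hU : U ∈ 𝓝 h₀) :
    ∃ δ > 0, ∃ K : ℝ, ∃ M > 0, ∃ β : V → ℝ → E, ∀ᶠ r in 𝓝[>] 0,
      (∀ ε ∈ Icc 0 r, ContinuousOn (fun h => β h ε) (ball h₀ r)) ∧
      TendstoUniformlyOn (fun ε h => ε⁻¹ • β h ε) (fun h => -R h ((1 - p h) (Q (S h) 0)))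
        (𝓝[>] 0) (ball h₀ r) ∧
      ∀ h ∈ ball h₀ r, ∀ ε ∈ Icc 0 r,
        IsStableZeroOn (splitMap (p h) (perturb f Q ε) (S h)) (closedBall 0 δ) K (β h ε) ∧
          ‖β h ε‖ ≤ M * ε := by
  obtain ⟨δ, hδ, K, M, hM, β, hβ⟩ := hf.exists_eventually_isStableZeroOn hU
  obtain ⟨R₀, hR₀, hR₀U⟩ := nhds_basis_closedBall.mem_iff.1 hU
  refine ⟨δ, hδ, K, M, hM, β, ?_⟩
  filter_upwards [eventually_forall_mem_closedBall_forall_mem_Icc hβ,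
    Ioo_mem_nhdsGT (lt_min hR₀ one_pos)] with r hr ⟨hr0, hrlt⟩
  have hrU : closedBall h₀ r ⊆ U :=
    (closedBall_subset_closedBall (hrlt.le.trans (min_le_left _ _))).trans hR₀U
  refine ⟨fun ε hε => ?_, ?_, fun h hh => hr h (ball_subset_closedBall hh)⟩
  · exact hf.continuousOn_isStableZeroOn (ball_subset_closedBall.trans hrU)
      ⟨hε.1, hε.2.trans (hrlt.le.trans (min_le_right _ _))⟩
      fun h hh => (hr h (ball_subset_closedBall hh) ε hε).1
  · have hstable : ∀ᶠ ε in 𝓝[>] 0, ∀ h ∈ closedBall h₀ r,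
        IsStableZeroOn (splitMap (p h) (perturb f Q ε) (S h)) (closedBall 0 δ) K (β h ε) := by
      filter_upwards [Ioc_mem_nhdsGT hr0] with ε hε h hh using (hr h hh ε ⟨hε.1.le, hε.2⟩).1
    exact (hf.tendstoUniformlyOn_isStableZeroOn (isCompact_closedBall h₀ r) hrU hδ hstable).mono
      ball_subset_closedBall

end LyapunovSchmidt

theorem stmt1_general
    {E : Type*} [NormedAddCommGroup E] [NormedSpace ℝ E] [CompleteSpace E]
    {V : Type*} [NormedAddCommGroup V] [NormedSpace ℝ V] [FiniteDimensional ℝ V]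
    (P : E → E) (P' : E → E →L[ℝ] E)
    (hP : ∀ x, HasFDerivAt P (P' x) x) (hP'cont : Continuous P')
    (Q : E → ℝ → E)
    (hQcont : ContinuousOn (fun p : E × ℝ => Q p.1 p.2) (univ ×ˢ Icc (0 : ℝ) 1))
    (hQlip : ∀ R > (0 : ℝ), ∃ L > (0 : ℝ), ∀ ε ∈ Icc (0 : ℝ) 1, ∀ ξ₁ ξ₂ : E,
      ‖ξ₁‖ ≤ R → ‖ξ₂‖ ≤ R → ‖Q ξ₁ ε - Q ξ₂ ε‖ ≤ L * ‖ξ₁ - ξ₂‖)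
    (h0 : V) (r0 : ℝ) (S : V → E) (S' : V → V →L[ℝ] E)
    (hS : ∀ h ∈ ball h0 r0, HasFDerivAt S (S' h) h)
    (hA1 : ∀ h ∈ ball h0 r0, P (S h) = S h)
    (π1 : V → E →L[ℝ] E)
    (hproj : ∀ h ∈ ball h0 r0, (π1 h).comp (π1 h) = π1 h)
    (hrange : ∀ h ∈ ball h0 r0, range ⇑(π1 h) = range ⇑(S' h))
    (hπ1cont : ContinuousOn π1 (ball h0 r0))
    (ρ : ℝ) (hρ : 0 < ρ) (hρ0 : ρ ≤ r0)
    (R : V → (E →L[ℝ] E))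
    (hR : ∀ h ∈ ball h0 ρ,
      (∀ x : E, R h x ∈ range ⇑(ContinuousLinearMap.id ℝ E - π1 h)) ∧
      (∀ x ∈ range ⇑(ContinuousLinearMap.id ℝ E - π1 h),
        R h ((ContinuousLinearMap.id ℝ E - π1 h) ((P' (S h)) x - x)) = x) ∧
      (∀ x ∈ range ⇑(ContinuousLinearMap.id ℝ E - π1 h),
        (ContinuousLinearMap.id ℝ E - π1 h) ((P' (S h)) (R h x) - R h x) = x))
    (Sinv : V → E → V)
    (hSinv : ∀ h ∈ ball h0 ρ, ∀ a, Sinv h (S' h a) = a) :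
    ∃ r1 r2 : ℝ, 0 < r2 ∧ r2 < r1 ∧ r1 < r0 ∧ r1 ≤ ρ ∧
    ∃ M > (0 : ℝ), ∃ H : E → V, ∃ β : V → ℝ → E,
      Tendsto H (𝓝 (S h0)) (𝓝 h0) ∧
      (∀ ε ∈ Icc (0 : ℝ) r1, ContinuousOn (fun h => β h ε) (ball h0 r1)) ∧
      (∀ h ∈ ball h0 r1, ∀ ε ∈ Icc (0 : ℝ) r1,
        β h ε ∈ range ⇑(ContinuousLinearMap.id ℝ E - π1 h) ∧ ‖β h ε‖ ≤ M * ε) ∧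
      TendstoUniformlyOn (fun ε h => ε⁻¹ • β h ε)
        (fun h => -(R h ((ContinuousLinearMap.id ℝ E - π1 h) (Q (S h) 0))))
        (𝓝[>] (0 : ℝ)) (ball h0 r1) ∧
      (∀ ξ ∈ ball (S h0) r2, ∀ ε ∈ Icc (0 : ℝ) r2,
        P ξ - ξ + ε • Q ξ ε = 0 →
        H ξ ∈ ball h0 r1 ∧
        Sinv (H ξ) (π1 (H ξ)
          (P (β (H ξ) ε + S (H ξ)) - (β (H ξ) ε + S (H ξ)) +
            ε • Q (β (H ξ) ε + S (H ξ)) ε)) = 0) ∧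
      (∀ h ∈ ball h0 r1, ∀ ε ∈ Icc (0 : ℝ) r1,
        Sinv h (π1 h (P (β h ε + S h) - (β h ε + S h) + ε • Q (β h ε + S h) ε)) = 0 →
        P (β h ε + S h) - (β h ε + S h) + ε • Q (β h ε + S h) ε = 0) := by
  have hsub : ball h0 ρ ⊆ ball h0 r0 := ball_subset_ball hρ0
  have hh0 : h0 ∈ ball h0 ρ := mem_ball_self hρ
  have hf : IsLyapunovSchmidtFamily (fun ξ => P ξ - ξ) (fun h => P' (S h) - 1) Q S π1 R
      (ball h0 ρ) :=
    .of_isFixedPt hP hP'cont hQcont hQlip (fun h hh => (hS h (hsub hh)).continuousAt)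
      (fun h hh => hA1 h (hsub hh)) (hπ1cont.mono hsub) (fun h hh => hproj h (hsub hh)) hR
  obtain ⟨δ, hδ, K, M, hM, β, hβ⟩ := hf.exists_branch (ball_mem_nhds h0 hρ)
  obtain ⟨H, hH, hHball⟩ := exists_tendsto_forall_ball_projection_sub_eq_zero isOpen_ball hh0
    hf.continuousOn_zeros (hS h0 (hsub hh0)) (Function.LeftInverse.injective (hSinv h0 hh0))
    hf.continuousOn_projection hf.isIdempotentElem (hrange h0 (hsub hh0))
  obtain ⟨r1, ⟨hβcont, hβlim, hβ⟩, hr1, hr1ρ⟩ := (hβ.and (Ioo_mem_nhdsGT hρ)).exists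
  obtain ⟨r2, hr2, hr21, hHr2⟩ := hHball r1 hr1 δ hδ
  have hr1sub : ball h0 r1 ⊆ ball h0 ρ := ball_subset_ball hr1ρ.le
  have hreduced {h} (hh : h ∈ ball h0 r1) {ε} (hε : ε ∈ Icc 0 r1) :=
    eq_zero_iff_of_splitMap_eq_zero (hf.isIdempotentElem h (hr1sub hh)) (hβ h hh ε hε).1.eq_zero
      (hSinv h (hr1sub hh)) (hrange h (hsub (hr1sub hh)))
  refine ⟨r1, r2, hr2, hr21, hr1ρ.trans_le hρ0, hr1ρ.le, M, hM, H, β, hH, hβcont,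
    fun h hh ε hε => ⟨?_, (hβ h hh ε hε).2⟩, hβlim, fun ξ hξ ε hε hF => ?_,
    fun h hh ε hε => (hreduced hh hε).2⟩
  · exact mem_range_one_sub_of_splitMap_eq_zero (hf.isIdempotentElem h (hr1sub hh))
      (hβ h hh ε hε).1.eq_zero
  · obtain ⟨hHξ, hle, hpξ⟩ := hHr2 ξ hξ
    have hε1 : ε ∈ Icc 0 r1 := ⟨hε.1, hε.2.trans hr21.le⟩
    have hξ_eq := add_eq_of_isStableZeroOn_splitMap (hβ (H ξ) hHξ ε hε1).1 hle hpξ hF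
    exact ⟨hHξ, (hreduced hHξ hε1).1 ((congrArg _ hξ_eq).trans hF)⟩

/- Theorem 2.1 (Lyapunov-Schmidt reduction with Lipschitz perturbation).
E is a real Banach space, F(ξ,ε) = P(ξ) − ξ + ε Q(ξ,ε); π1 h = π_{1,h} is the projection
onto E_{1,h} = S'(h)(ℝ^k), π_{2,h} = I − π_{1,h} with range E_{2,h}; R h is the inverse of
π_{2,h}(P'(S(h)) − I)π_{2,h} on E_{2,h}; Sinv h is the inverse of S'(h) : ℝ^k → E_{1,h}. -/
theorem stmt1
    {E : Type*} [NormedAddCommGroup E] [NormedSpace ℝ E] [CompleteSpace E]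
    {k : ℕ} (hk : 1 ≤ k)
    (P : E → E) (P' : E → E →L[ℝ] E)
    (hP : ∀ x, HasFDerivAt P (P' x) x) (hP'cont : Continuous P')
    (Q : E → ℝ → E)
    (hQcont : ContinuousOn (fun p : E × ℝ => Q p.1 p.2) (univ ×ˢ Icc (0:ℝ) 1))
    (hQlip : ∀ R > (0:ℝ), ∃ L > (0:ℝ), ∀ ε ∈ Icc (0:ℝ) 1, ∀ ξ₁ ξ₂ : E,
      ‖ξ₁‖ ≤ R → ‖ξ₂‖ ≤ R → ‖Q ξ₁ ε - Q ξ₂ ε‖ ≤ L * ‖ξ₁ - ξ₂‖)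
    -- (A1)
    (h0 : EuclideanSpace ℝ (Fin k)) (r0 : ℝ) (hr0 : 0 < r0)
    (S : EuclideanSpace ℝ (Fin k) → E)
    (S' : EuclideanSpace ℝ (Fin k) → (EuclideanSpace ℝ (Fin k) →L[ℝ] E))
    (hS : ∀ h ∈ ball h0 r0, HasFDerivAt S (S' h) h)
    (hS'cont : ContinuousOn S' (ball h0 r0))
    (hA1 : ∀ h ∈ ball h0 r0, P (S h) = S h)
    -- (A2)
    (hA2 : Function.Injective ⇑(S' h0))
    -- (A3)
    (π1 : EuclideanSpace ℝ (Fin k) → E →L[ℝ] E)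
    (hproj : ∀ h ∈ ball h0 r0, (π1 h).comp (π1 h) = π1 h)
    (hrange : ∀ h ∈ ball h0 r0, range ⇑(π1 h) = range ⇑(S' h))
    (hπ1cont : ContinuousOn π1 (ball h0 r0))
    -- (A4) together with the local inverses R h and Sinv h on a small ball around h0
    (ρ : ℝ) (hρ : 0 < ρ) (hρ0 : ρ ≤ r0)
    (R : EuclideanSpace ℝ (Fin k) → (E →L[ℝ] E))
    (hR : ∀ h ∈ ball h0 ρ,
      (∀ x : E, R h x ∈ range ⇑(ContinuousLinearMap.id ℝ E - π1 h)) ∧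
      (∀ x ∈ range ⇑(ContinuousLinearMap.id ℝ E - π1 h),
        R h ((ContinuousLinearMap.id ℝ E - π1 h) ((P' (S h)) x - x)) = x) ∧
      (∀ x ∈ range ⇑(ContinuousLinearMap.id ℝ E - π1 h),
        (ContinuousLinearMap.id ℝ E - π1 h) ((P' (S h)) (R h x) - R h x) = x))
    (Sinv : EuclideanSpace ℝ (Fin k) → E → EuclideanSpace ℝ (Fin k))
    (hSinv : ∀ h ∈ ball h0 ρ, ∀ a, Sinv h (S' h a) = a) :
    ∃ r1 r2 : ℝ, 0 < r2 ∧ r2 < r1 ∧ r1 < r0 ∧ r1 ≤ ρ ∧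
    ∃ M > (0:ℝ), ∃ H : E → EuclideanSpace ℝ (Fin k), ∃ β : EuclideanSpace ℝ (Fin k) → ℝ → E,
      -- H(ξ) → h0 as ξ → ξ0
      Tendsto H (𝓝 (S h0)) (𝓝 h0) ∧
      -- β(·,ε) continuous
      (∀ ε ∈ Icc (0:ℝ) r1, ContinuousOn (fun h => β h ε) (ball h0 r1)) ∧
      -- β(h,ε) ∈ E_{2,h} and ‖β(h,ε)‖ ≤ M ε
      (∀ h ∈ ball h0 r1, ∀ ε ∈ Icc (0:ℝ) r1,
        β h ε ∈ range ⇑(ContinuousLinearMap.id ℝ E - π1 h) ∧ ‖β h ε‖ ≤ M * ε) ∧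
      -- β(h,ε)/ε → −R_h π_{2,h} Q(S(h),0) as ε → 0+, uniformly in h
      TendstoUniformlyOn (fun ε h => ε⁻¹ • β h ε)
        (fun h => -(R h ((ContinuousLinearMap.id ℝ E - π1 h) (Q (S h) 0))))
        (𝓝[>] (0:ℝ)) (ball h0 r1) ∧
      -- (1) every solution of F(ξ,ε) = 0 near (ξ0,0) yields a solution h = H(ξ) of the
      -- reduced equation
      (∀ ξ ∈ ball (S h0) r2, ∀ ε ∈ Icc (0:ℝ) r2,
        P ξ - ξ + ε • Q ξ ε = 0 →
        H ξ ∈ ball h0 r1 ∧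
        Sinv (H ξ) (π1 (H ξ)
          (P (β (H ξ) ε + S (H ξ)) - (β (H ξ) ε + S (H ξ)) +
            ε • Q (β (H ξ) ε + S (H ξ)) ε)) = 0) ∧
      -- (2) every solution (h,ε) of the reduced equation yields a solution
      -- ξ = β(h,ε) + S(h) of F(ξ,ε) = 0
      (∀ h ∈ ball h0 r1, ∀ ε ∈ Icc (0:ℝ) r1,
        Sinv h (π1 h (P (β h ε + S h) - (β h ε + S h) + ε • Q (β h ε + S h) ε)) = 0 →
        P (β h ε + S h) - (β h ε + S h) + ε • Q (β h ε + S h) ε = 0) :=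
  stmt1_general P P' hP hP'cont Q hQcont hQlip h0 r0 S S' hS hA1 π1 hproj hrange hπ1cont ρ hρ hρ0
    R hR Sinv hSinv
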